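/- arXiv:1702.06859 — 2 statements merged into one kernel-verified Lean document; each statement's English description precedes it below -/
import Mathlib

section
/- Let T > 0, let σ : ℝ → ℝ be Lipschitz continuous with σ(x) > 0 for all x, let b and b̃ belong to the class M, and let f : ℝ → ℝ be of class C² with f'(x) ≠ 0 for all x ∈ ℝ. Let u be a classical solution of the parabolic equation associated with (b, σ, f) and let ũ be a classical solution of the parabolic equation associated with (b̃, σ, f). If there exist ε ∈ (0, T) and a nonempty open set ω ⊂ ℝ such that u(t,x) = ũ(t,x) for all t ∈ (0, ε) and all x ∈ ω, then b(x) = b̃(x) for all x ∈ ℝ. -/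
open Set Filter

/-- A function `ψ : ℝ → ℝ` is piecewise analytic if there exist `δ > 0`, a strictly
increasing sequence `(κ j)_{j ∈ ℤ}` tending to `-∞` at `-∞` and `+∞` at `+∞` with
`κ (j+1) - κ j > δ`, and functions `φ j` analytic on `[κ j, κ (j+1)]`, such that
`ψ = φ j` on `[κ j, κ (j+1))`. -/
def PiecewiseAnalytic (ψ : ℝ → ℝ) : Prop :=
  ∃ (δ : ℝ) (κ : ℤ → ℝ) (φ : ℤ → ℝ → ℝ),
    0 < δ ∧ StrictMono κ ∧
    Tendsto κ atBot atBot ∧ Tendsto κ atTop atTop ∧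
    (∀ j : ℤ, δ < κ (j + 1) - κ j) ∧
    (∀ j : ℤ, AnalyticOn ℝ (φ j) (Icc (κ j) (κ (j + 1)))) ∧
    (∀ j : ℤ, ∀ x ∈ Ico (κ j) (κ (j + 1)), ψ x = φ j x)

/-- The class `M` of Lipschitz-continuous, piecewise analytic functions on `ℝ`. -/
def ClassM (ψ : ℝ → ℝ) : Prop :=
  (∃ K, LipschitzWith K ψ) ∧ PiecewiseAnalytic ψ

/-- `u : [0,T) × ℝ → ℝ` is a classical solution of
`∂ₜ u = (1/2) σ(x)² ∂ₓₓ u + b(x) ∂ₓ u`, `u(0, ·) = f`: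
`u`, `∂ₜ u`, `∂ₓ u`, `∂ₓₓ u` exist and are continuous on `[0,T) × ℝ`, the PDE holds
there, and the initial condition holds. -/
def IsClassicalSolution (T : ℝ) (b σ f : ℝ → ℝ) (u : ℝ → ℝ → ℝ) : Prop :=
  ContinuousOn (fun p : ℝ × ℝ => u p.1 p.2) (Ico 0 T ×ˢ univ) ∧
  (∀ t ∈ Ico 0 T, ∀ x : ℝ, DifferentiableAt ℝ (fun s => u s x) t) ∧
  (∀ t ∈ Ico 0 T, ∀ x : ℝ, DifferentiableAt ℝ (fun y => u t y) x) ∧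
  (∀ t ∈ Ico 0 T, ∀ x : ℝ, DifferentiableAt ℝ (deriv (fun y => u t y)) x) ∧
  ContinuousOn (fun p : ℝ × ℝ => deriv (fun s => u s p.2) p.1) (Ico 0 T ×ˢ univ) ∧
  ContinuousOn (fun p : ℝ × ℝ => deriv (fun y => u p.1 y) p.2) (Ico 0 T ×ˢ univ) ∧
  ContinuousOn (fun p : ℝ × ℝ => deriv (deriv (fun y => u p.1 y)) p.2) (Ico 0 T ×ˢ univ) ∧
  (∀ t ∈ Ico 0 T, ∀ x : ℝ,
    deriv (fun s => u s x) t =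
      (1 / 2) * (σ x) ^ 2 * deriv (deriv (fun y => u t y)) x
        + b x * deriv (fun y => u t y) x) ∧
  (∀ x : ℝ, u 0 x = f x)

/-
The difference `w = u - ũ` solves `∂ₜ w = (σ² / 2) ∂ₓₓ w + b ∂ₓ w + (b - b̃) ∂ₓ ũ` with zero initial
data and, at any point `x₀` of the observation set, `w = ∂ₓ w = 0`. Let `z` be the first point to
the right of `x₀` behind which `b` and `b̃` differ. By analyticity `b - b̃` does not change sign
immediately behind `z`, and by compactness `∂ₓ ũ` has the sign of `f'` for small times, so the
source term has a fixed sign on some `[x₀, r]` with `r > z` (up to exchanging `u` and `ũ`, it is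
nonnegative). If `b r ≠ b̃ r`, then `∂ₜ w (0, r) > 0`, hence `w t r ≥ c t` for small `t`, and the
Hopf boundary point lemma yields `∂ₓ w (t, x₀) > 0`, a contradiction. Points to the left of `x₀`
follow by reflection.
-/

open scoped Topology

lemma eqOn_Ici_of_forall_exists_gt {α β : Type*} [ConditionallyCompleteLinearOrder α] {f g : α → β}
    {a : α} (h : ∀ z ≥ a, EqOn f g (Ico a z) → ∃ r > z, EqOn f g (Icc a r)) :
    EqOn f g (Ici a) := by
  by_contra hne
  obtain ⟨y, hy⟩ : {y ∈ Ici a | f y ≠ g y}.Nonempty := by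
    simpa [EqOn, Set.Nonempty] using hne
  obtain ⟨z, hz⟩ : ∃ z, IsGLB {y ∈ Ici a | f y ≠ g y} z :=
    ⟨_, isGLB_csInf ⟨y, hy⟩ ⟨a, fun _ hy => hy.1⟩⟩
  have hbefore : EqOn f g (Ico a z) := by
    intro x hx
    by_contra hne
    exact hx.2.not_ge (hz.1 ⟨hx.1, hne⟩)
  obtain ⟨r, hzr, heq⟩ := h z (hz.2 fun _ hy => hy.1) hbefore
  refine hzr.not_ge (hz.2 fun y ⟨hay, hne⟩ => ?_)
  by_contra! hyr
  exact hne (heq ⟨hay, hyr.le⟩)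

section OneVariable

variable {f : ℝ → ℝ} {f' c x : ℝ}

lemma nonneg_of_hasDerivWithinAt_Ioi (hf : HasDerivWithinAt f f' (Ioi x) x)
    (hmin : ∀ᶠ y in 𝓝[>] x, f x ≤ f y) : 0 ≤ f' := by
  refine ge_of_tendsto ((hasDerivWithinAt_iff_tendsto_slope' self_notMem_Ioi).1 hf) ?_
  filter_upwards [hmin, self_mem_nhdsWithin] with y hy hxy
  rw [slope_def_field]
  exact div_nonneg (sub_nonneg.2 hy) (sub_nonneg.2 (le_of_lt hxy))

lemma nonpos_of_hasDerivWithinAt_Iio (hf : HasDerivWithinAt f f' (Iio x) x)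
    (hmin : ∀ᶠ y in 𝓝[<] x, f x ≤ f y) : f' ≤ 0 := by
  refine le_of_tendsto ((hasDerivWithinAt_iff_tendsto_slope' self_notMem_Iio).1 hf) ?_
  filter_upwards [hmin, self_mem_nhdsWithin] with y hy hyx
  rw [slope_def_field]
  exact div_nonpos_of_nonneg_of_nonpos (sub_nonneg.2 hy) (sub_nonpos.2 (le_of_lt hyx))

lemma eventually_mul_sub_lt_sub_of_hasDerivWithinAt_Ioi
    (hf : HasDerivWithinAt f f' (Ioi x) x) (hc : c < f') :
    ∀ᶠ y in 𝓝[>] x, c * (y - x) < f y - f x := by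
  have hslope := (hasDerivWithinAt_iff_tendsto_slope' self_notMem_Ioi).1 hf
  filter_upwards [hslope.eventually_const_lt hc, self_mem_nhdsWithin] with y hy hxy
  rwa [slope_def_field, lt_div_iff₀ (sub_pos.2 hxy)] at hy

lemma deriv_deriv_nonneg_of_isLocalMin (hmin : IsLocalMin f x) (hf : ContinuousAt f x) :
    0 ≤ deriv (deriv f) x := by
  by_contra! hneg
  have hmax : IsLocalMax f x := isLocalMax_of_deriv_deriv_neg hneg hmin.deriv_eq_zero hf
  have hconst : f =ᶠ[𝓝 x] fun _ => f x := by
    filter_upwards [hmin, hmax] with y using fun h₁ h₂ => le_antisymm h₂ h₁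
  have hzero : deriv (deriv f) x = 0 := by simpa using hconst.deriv.deriv_eq
  exact hneg.ne hzero

end OneVariable

section OneSidedAnalytic

variable {ψ : ℝ → ℝ} {x : ℝ}

lemma eventually_nonneg_or_eventually_nonpos_nhdsGE (hψ : AnalyticWithinAt ℝ ψ (Ici x) x) :
    (∀ᶠ y in 𝓝[≥] x, 0 ≤ ψ y) ∨ ∀ᶠ y in 𝓝[≥] x, ψ y ≤ 0 := by
  obtain ⟨g, hψg, hg⟩ := analyticWithinAt_iff_exists_analyticAt.1 hψ
  rw [insert_eq_of_mem self_mem_Ici] at hψg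
  by_cases hg0 : ∀ᶠ y in 𝓝 x, g y = 0
  · left
    filter_upwards [hψg, nhdsWithin_le_nhds hg0] with y hy hy0
    exact (hy.trans hy0).ge
  obtain ⟨n, h, hh, hhx, hgh⟩ := hg.exists_eventuallyEq_pow_smul_nonzero_iff.2 hg0
  have hψh : ∀ᶠ y in 𝓝[≥] x, ψ y = (y - x) ^ n * h y ∧ 0 ≤ (y - x) ^ n := by
    filter_upwards [hψg, nhdsWithin_le_nhds hgh, self_mem_nhdsWithin] with y hy hyh hxy
    exact ⟨hy.trans hyh, pow_nonneg (sub_nonneg.2 hxy) n⟩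
  rcases hhx.lt_or_gt with hneg | hpos
  · right
    filter_upwards [hψh, nhdsWithin_le_nhds (hh.continuousAt.eventually_lt_const hneg)]
      with y ⟨hy, hpow⟩ hyh
    exact hy ▸ mul_nonpos_of_nonneg_of_nonpos hpow hyh.le
  · left
    filter_upwards [hψh, nhdsWithin_le_nhds (hh.continuousAt.eventually_const_lt hpos)]
      with y ⟨hy, hpow⟩ hyh
    exact hy ▸ mul_nonneg hpow hyh.le

lemma eventually_mul_nonneg_or_eventually_mul_nonpos_nhdsGE {g : ℝ → ℝ}
    (hψ : AnalyticWithinAt ℝ ψ (Ici x) x) (hg : ContinuousAt g x) (hgx : g x ≠ 0) :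
    (∀ᶠ y in 𝓝[≥] x, 0 ≤ ψ y * g y) ∨ ∀ᶠ y in 𝓝[≥] x, ψ y * g y ≤ 0 := by
  rcases hgx.lt_or_gt with hneg | hpos
  · have hg' : ∀ᶠ y in 𝓝[≥] x, g y < 0 := nhdsWithin_le_nhds (hg.eventually_lt_const hneg)
    refine (eventually_nonneg_or_eventually_nonpos_nhdsGE hψ).symm.imp (fun h => ?_) (fun h => ?_)
    · filter_upwards [h, hg'] with y hy hgy using mul_nonneg_of_nonpos_of_nonpos hy hgy.le
    · filter_upwards [h, hg'] with y hy hgy using mul_nonpos_of_nonneg_of_nonpos hy hgy.le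
  · have hg' : ∀ᶠ y in 𝓝[≥] x, 0 < g y := nhdsWithin_le_nhds (hg.eventually_const_lt hpos)
    refine (eventually_nonneg_or_eventually_nonpos_nhdsGE hψ).imp (fun h => ?_) (fun h => ?_)
    · filter_upwards [h, hg'] with y hy hgy using mul_nonneg hy hgy.le
    · filter_upwards [h, hg'] with y hy hgy using mul_nonpos_of_nonpos_of_nonneg hy hgy.le

lemma analyticWithinAt_Ici_comp_neg (hψ : AnalyticWithinAt ℝ ψ (Iic (-x)) (-x)) :
    AnalyticWithinAt ℝ (fun y => ψ (-y)) (Ici x) x :=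
  hψ.comp (g := ψ) (f := fun y => -y) analyticAt_id.neg.analyticWithinAt
    fun _ hy => neg_le_neg (mem_Ici.1 hy)

end OneSidedAnalytic

section PiecewiseAnalytic

variable {ψ : ℝ → ℝ}

lemma exists_int_le_lt_succ {κ : ℤ → ℝ} (hmono : StrictMono κ) (hbot : Tendsto κ atBot atBot)
    (htop : Tendsto κ atTop atTop) (x : ℝ) : ∃ j, κ j ≤ x ∧ x < κ (j + 1) := by
  obtain ⟨n, hn⟩ := (htop.eventually_gt_atTop x).exists
  obtain ⟨j, hj, hmax⟩ : ∃ j, κ j ≤ x ∧ ∀ i, κ i ≤ x → i ≤ j :=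
    Int.exists_greatest_of_bdd ⟨n, fun i hi => (hmono.lt_iff_lt.1 (hi.trans_lt hn)).le⟩
      (hbot.eventually_le_atBot x).exists
  refine ⟨j, hj, ?_⟩
  by_contra! hle
  exact (lt_add_one j).not_ge (hmax _ hle)

lemma PiecewiseAnalytic.analyticWithinAt_Ici (hψ : PiecewiseAnalytic ψ) (x : ℝ) :
    AnalyticWithinAt ℝ ψ (Ici x) x := by
  obtain ⟨δ, κ, φ, -, hmono, hbot, htop, -, hφ, hψφ⟩ := hψ
  obtain ⟨j, hj, hj'⟩ := exists_int_le_lt_succ hmono hbot htop x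
  have hIco : AnalyticWithinAt ℝ ψ (Ico x (κ (j + 1))) x :=
    ((hφ j x ⟨hj, hj'.le⟩).mono (Ico_subset_Icc_self.trans (Icc_subset_Icc_left hj))).congr
      (fun y hy => hψφ j y ⟨hj.trans hy.1, hy.2⟩) (hψφ j x ⟨hj, hj'⟩)
  exact hIco.mono_of_mem_nhdsWithin (Ico_mem_nhdsGE hj')

-- The pieces only cover half-open intervals, so continuity is needed at the right end of a piece.
lemma PiecewiseAnalytic.analyticWithinAt_Iic (hψ : PiecewiseAnalytic ψ) (hcont : Continuous ψ)
    (x : ℝ) : AnalyticWithinAt ℝ ψ (Iic x) x := by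
  obtain ⟨δ, κ, φ, -, hmono, hbot, htop, -, hφ, hψφ⟩ := hψ
  have hEqOn : ∀ j, EqOn ψ (φ j) (Icc (κ j) (κ (j + 1))) := fun j =>
    EqOn.of_subset_closure (hψφ j) hcont.continuousOn (hφ j).continuousOn Ico_subset_Icc_self
      (closure_Ico (hmono (lt_add_one j)).ne).ge
  obtain ⟨j, hj, hj'⟩ : ∃ j, κ j < x ∧ x ≤ κ (j + 1) := by
    obtain ⟨j, hj, hj'⟩ := exists_int_le_lt_succ hmono hbot htop x
    rcases hj.lt_or_eq with hlt | rfl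
    · exact ⟨j, hlt, hj'.le⟩
    · exact ⟨j - 1, hmono (sub_one_lt j), by rw [sub_add_cancel]⟩
  have hIcc : AnalyticWithinAt ℝ ψ (Icc (κ j) (κ (j + 1))) x :=
    (hφ j x ⟨hj.le, hj'⟩).congr (hEqOn j) (hEqOn j ⟨hj.le, hj'⟩)
  exact (hIcc.mono (Icc_subset_Icc_right hj')).mono_of_mem_nhdsWithin (Icc_mem_nhdsLE hj)

end PiecewiseAnalytic

/-- `z` is a classical supersolution of `∂ₜ z = a ∂ₓₓ z + b ∂ₓ z` on the cylinder `(0, e] × (l, r)`,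
continuous up to the boundary. This is the class of functions to which the maximum principle and the
Hopf lemma apply. -/
structure IsSupersolution (a b : ℝ → ℝ → ℝ) (e l r : ℝ) (z : ℝ → ℝ → ℝ) : Prop where
  continuousOn : ContinuousOn (fun p : ℝ × ℝ => z p.1 p.2) (Icc 0 e ×ˢ Icc l r)
  differentiableAt_time : ∀ t ∈ Ioc 0 e, ∀ x ∈ Ioo l r, DifferentiableAt ℝ (fun s => z s x) t
  differentiableAt_space : ∀ t ∈ Ioc 0 e, ∀ x ∈ Ioo l r, DifferentiableAt ℝ (z t) x
  differentiableAt_deriv : ∀ t ∈ Ioc 0 e, ∀ x ∈ Ioo l r, DifferentiableAt ℝ (deriv (z t)) x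
  le_deriv_time : ∀ t ∈ Ioc 0 e, ∀ x ∈ Ioo l r,
    a t x * deriv (deriv (z t)) x + b t x * deriv (z t) x ≤ deriv (fun s => z s x) t

namespace IsSupersolution

variable {a b z v : ℝ → ℝ → ℝ} {e l r : ℝ}

lemma add (hz : IsSupersolution a b e l r z) (hv : IsSupersolution a b e l r v) :
    IsSupersolution a b e l r (fun t x => z t x + v t x) := by
  have hderiv : ∀ t ∈ Ioc 0 e, ∀ x ∈ Ioo l r,
      deriv (fun y => z t y + v t y) x = deriv (z t) x + deriv (v t) x := fun t ht x hx =>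
    deriv_fun_add (hz.differentiableAt_space t ht x hx) (hv.differentiableAt_space t ht x hx)
  have hderiv_eventuallyEq : ∀ t ∈ Ioc 0 e, ∀ x ∈ Ioo l r,
      deriv (fun y => z t y + v t y) =ᶠ[𝓝 x] fun y => deriv (z t) y + deriv (v t) y := by
    intro t ht x hx
    filter_upwards [isOpen_Ioo.mem_nhds hx] with y hy using hderiv t ht y hy
  refine ⟨hz.continuousOn.add hv.continuousOn, fun t ht x hx => ?_, fun t ht x hx => ?_,
    fun t ht x hx => ?_, fun t ht x hx => ?_⟩
  · exact (hz.differentiableAt_time t ht x hx).add (hv.differentiableAt_time t ht x hx)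
  · exact (hz.differentiableAt_space t ht x hx).add (hv.differentiableAt_space t ht x hx)
  · exact ((hz.differentiableAt_deriv t ht x hx).add
      (hv.differentiableAt_deriv t ht x hx)).congr_of_eventuallyEq (hderiv_eventuallyEq t ht x hx)
  · rw [(hderiv_eventuallyEq t ht x hx).deriv_eq, hderiv t ht x hx,
      deriv_fun_add (hz.differentiableAt_deriv t ht x hx) (hv.differentiableAt_deriv t ht x hx),
      deriv_fun_add (hz.differentiableAt_time t ht x hx) (hv.differentiableAt_time t ht x hx)]
    linarith [hz.le_deriv_time t ht x hx, hv.le_deriv_time t ht x hx]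

lemma nonpos_of_isMinOn_add_mul_time {δ t x : ℝ} (hz : IsSupersolution a b e l r z)
    (ht : t ∈ Ioc 0 e) (hx : x ∈ Ioo l r) (ha : 0 ≤ a t x)
    (hmin : IsMinOn (fun p : ℝ × ℝ => z p.1 p.2 + δ * p.1) (Icc 0 e ×ˢ Icc l r) (t, x)) :
    δ ≤ 0 := by
  have hspace : IsLocalMin (z t) x := by
    filter_upwards [isOpen_Ioo.mem_nhds hx] with y hy
    have := hmin (a := (t, y)) ⟨⟨ht.1.le, ht.2⟩, Ioo_subset_Icc_self hy⟩
    simpa using this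
  have htime : deriv (fun s => z s x) t + δ ≤ 0 := by
    have hd := (hz.differentiableAt_time t ht x hx).hasDerivAt.add ((hasDerivAt_id t).const_mul δ)
    rw [mul_one] at hd
    refine nonpos_of_hasDerivWithinAt_Iio hd.hasDerivWithinAt ?_
    filter_upwards [Ioo_mem_nhdsLT ht.1] with s hs
    exact hmin (a := (s, x)) ⟨⟨hs.1.le, hs.2.le.trans ht.2⟩, Ioo_subset_Icc_self hx⟩
  have hspace₂ : 0 ≤ deriv (deriv (z t)) x :=
    deriv_deriv_nonneg_of_isLocalMin hspace (hz.differentiableAt_space t ht x hx).continuousAt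
  have hsuper := hz.le_deriv_time t ht x hx
  rw [hspace.deriv_eq_zero, mul_zero, add_zero] at hsuper
  linarith [mul_nonneg ha hspace₂]

theorem nonneg (hz : IsSupersolution a b e l r z)
    (ha : ∀ t ∈ Ioc 0 e, ∀ x ∈ Ioo l r, 0 ≤ a t x)
    (hz₀ : ∀ x ∈ Icc l r, 0 ≤ z 0 x) (hzl : ∀ t ∈ Icc 0 e, 0 ≤ z t l)
    (hzr : ∀ t ∈ Icc 0 e, 0 ≤ z t r) {t x : ℝ} (ht : t ∈ Icc 0 e) (hx : x ∈ Icc l r) :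
    0 ≤ z t x := by
  by_contra! hneg
  obtain ⟨δ, hδ, hδt⟩ : ∃ δ > 0, z t x + δ * t < 0 := by
    have hcont : ContinuousAt (fun δ : ℝ => z t x + δ * t) 0 := by fun_prop
    have hlt : ∀ᶠ δ in 𝓝[>] (0 : ℝ), z t x + δ * t < 0 :=
      nhdsWithin_le_nhds (hcont.eventually_lt_const (by simpa using hneg))
    exact (hlt.and self_mem_nhdsWithin).exists.imp fun _ h => h.symm
  obtain ⟨⟨t₀, x₀⟩, ⟨ht₀, hx₀⟩, hmin⟩ := (isCompact_Icc.prod isCompact_Icc).exists_isMinOn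
    ⟨(t, x), ht, hx⟩ (f := fun p : ℝ × ℝ => z p.1 p.2 + δ * p.1)
    (hz.continuousOn.add (by fun_prop))
  have hlt : z t₀ x₀ < 0 := by
    have hle : z t₀ x₀ + δ * t₀ ≤ z t x + δ * t := hmin (a := (t, x)) ⟨ht, hx⟩
    linarith [mul_nonneg hδ.le ht₀.1]
  have ht₀' : t₀ ∈ Ioc 0 e := by
    refine ⟨ht₀.1.lt_of_ne ?_, ht₀.2⟩
    rintro rfl
    exact hlt.not_ge (hz₀ x₀ hx₀)
  have hx₀' : x₀ ∈ Ioo l r := by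
    refine ⟨hx₀.1.lt_of_ne ?_, hx₀.2.lt_of_ne ?_⟩
    · rintro rfl
      exact hlt.not_ge (hzl t₀ ht₀)
    · rintro rfl
      exact hlt.not_ge (hzr t₀ ht₀)
  exact hδ.not_ge (hz.nonpos_of_isMinOn_add_mul_time ht₀' hx₀' (ha t₀ ht₀' x₀ hx₀') hmin)

end IsSupersolution

/-- The barrier of the Hopf lemma: an exponential wave of amplitude `q` and rate `lam`, vanishing on
the line `x = r - m t` and positive to its left. -/
noncomputable def hopfBarrier (q lam m r t x : ℝ) : ℝ :=
  q * (1 - Real.exp (lam * (x - r + m * t)))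

section HopfBarrier

variable {q lam m r : ℝ}

lemma hopfBarrier_nonneg {t x : ℝ} (hq : 0 ≤ q) (hlam : 0 ≤ lam) (h : x - r + m * t ≤ 0) :
    0 ≤ hopfBarrier q lam m r t x :=
  mul_nonneg hq (sub_nonneg.2 (Real.exp_le_one_iff.2 (mul_nonpos_of_nonneg_of_nonpos hlam h)))

lemma hasDerivAt_hopfBarrier_time (q lam m r t x : ℝ) :
    HasDerivAt (fun s => hopfBarrier q lam m r s x)
      (-(q * lam * m * Real.exp (lam * (x - r + m * t)))) t := by
  have hlin : HasDerivAt (fun s => lam * (x - r + m * s)) (lam * (m * 1)) t :=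
    (((hasDerivAt_id t).const_mul m).const_add (x - r)).const_mul lam
  exact ((hlin.exp.const_sub 1).const_mul q).congr_deriv (by ring)

lemma hasDerivAt_hopfBarrier_space (q lam m r t x : ℝ) :
    HasDerivAt (hopfBarrier q lam m r t) (-(q * lam * Real.exp (lam * (x - r + m * t)))) x := by
  have hlin : HasDerivAt (fun y => lam * (y - r + m * t)) (lam * 1) x :=
    (((hasDerivAt_id x).sub_const r).add_const (m * t)).const_mul lam
  exact ((hlin.exp.const_sub 1).const_mul q).congr_deriv (by ring)

lemma hasDerivAt_deriv_hopfBarrier (q lam m r t x : ℝ) :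
    HasDerivAt (deriv (hopfBarrier q lam m r t))
      (-(q * lam ^ 2 * Real.exp (lam * (x - r + m * t)))) x := by
  have hderiv : deriv (hopfBarrier q lam m r t) =
      fun y => lam * hopfBarrier q lam m r t y + -(q * lam) := by
    funext y
    rw [(hasDerivAt_hopfBarrier_space q lam m r t y).deriv, hopfBarrier]
    ring
  rw [hderiv]
  exact (((hasDerivAt_hopfBarrier_space q lam m r t x).const_mul lam).add_const _).congr_deriv
    (by ring)

lemma isSupersolution_hopfBarrier {a b : ℝ → ℝ → ℝ} {e l : ℝ} (hq : 0 ≤ q) (hlam : 0 ≤ lam)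
    (hm : ∀ t ∈ Ioc 0 e, ∀ x ∈ Ioo l r, m ≤ a t x * lam + b t x) :
    IsSupersolution a b e l r (hopfBarrier q lam m r) where
  continuousOn := by unfold hopfBarrier; fun_prop
  differentiableAt_time t _ x _ := (hasDerivAt_hopfBarrier_time q lam m r t x).differentiableAt
  differentiableAt_space t _ x _ := (hasDerivAt_hopfBarrier_space q lam m r t x).differentiableAt
  differentiableAt_deriv t _ x _ := (hasDerivAt_deriv_hopfBarrier q lam m r t x).differentiableAt
  le_deriv_time t ht x hx := by
    rw [(hasDerivAt_hopfBarrier_time q lam m r t x).deriv,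
      (hasDerivAt_hopfBarrier_space q lam m r t x).deriv,
      (hasDerivAt_deriv_hopfBarrier q lam m r t x).deriv]
    have hcoef : 0 ≤ q * lam * Real.exp (lam * (x - r + m * t)) := by positivity
    linear_combination mul_le_mul_of_nonneg_left (hm t ht x hx) hcoef

lemma neg_mul_le_hopfBarrier_right {e t : ℝ} (hq : 0 ≤ q) (hlam : 0 ≤ lam) (hm : 0 ≤ m)
    (ht : t ∈ Icc 0 e) :
    -(q * (lam * m * Real.exp (lam * m * e)) * t) ≤ hopfBarrier q lam m r t r := by
  have hexp : Real.exp (lam * m * t) - 1 ≤ lam * m * t * Real.exp (lam * m * e) := by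
    have htangent : (1 - lam * m * t) * Real.exp (lam * m * t) ≤ 1 := by
      calc (1 - lam * m * t) * Real.exp (lam * m * t)
          ≤ Real.exp (-(lam * m * t)) * Real.exp (lam * m * t) := by
            gcongr
            linarith [Real.add_one_le_exp (-(lam * m * t))]
        _ = 1 := by rw [← Real.exp_add, neg_add_cancel, Real.exp_zero]
    have hmono : lam * m * t * Real.exp (lam * m * t) ≤ lam * m * t * Real.exp (lam * m * e) := by
      have := ht.1
      gcongr
      exact ht.2
    linarith
  calc -(q * (lam * m * Real.exp (lam * m * e)) * t)
      = -(q * (lam * m * t * Real.exp (lam * m * e))) := by ring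
    _ ≤ -(q * (Real.exp (lam * m * t) - 1)) := neg_le_neg (mul_le_mul_of_nonneg_left hexp hq)
    _ = hopfBarrier q lam m r t r := by rw [hopfBarrier, sub_self, zero_add, ← mul_assoc lam]; ring

end HopfBarrier

-- Speed `(r - l) / e` makes the wave start at `r` and reach `l` at time `e`; a steep enough wave is
-- a supersolution at that speed.
theorem IsSupersolution.deriv_pos_left {a b z : ℝ → ℝ → ℝ} {e l r a₀ B c : ℝ}
    (hz : IsSupersolution a b e l r z) (he : 0 < e) (hlr : l < r) (ha₀ : 0 < a₀)
    (ha : ∀ t ∈ Ioc 0 e, ∀ x ∈ Ioo l r, a₀ ≤ a t x)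
    (hb : ∀ t ∈ Ioc 0 e, ∀ x ∈ Ioo l r, B ≤ b t x) (hc : 0 < c)
    (hz₀ : ∀ x ∈ Icc l r, 0 ≤ z 0 x) (hzl : ∀ t ∈ Icc 0 e, 0 ≤ z t l)
    (hzr : ∀ t ∈ Icc 0 e, c * t ≤ z t r) (hzel : z e l = 0)
    (hd : DifferentiableAt ℝ (z e) l) : 0 < deriv (z e) l := by
  obtain ⟨m, hm, hme⟩ : ∃ m > 0, m * e = r - l :=
    ⟨(r - l) / e, div_pos (sub_pos.2 hlr) he, div_mul_cancel₀ _ he.ne'⟩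
  obtain ⟨lam, hlam, hmlam⟩ : ∃ lam > 0, m ≤ a₀ * lam + B := by
    refine ⟨(|m - B| + 1) / a₀, by positivity, ?_⟩
    rw [mul_div_cancel₀ _ ha₀.ne']
    linarith [le_abs_self (m - B)]
  obtain ⟨q, hq, hqc⟩ : ∃ q > 0, q * (lam * m * Real.exp (lam * m * e)) = c :=
    ⟨c / (lam * m * Real.exp (lam * m * e)), by positivity, div_mul_cancel₀ _ (by positivity)⟩
  have hspeed : ∀ t ∈ Ioc 0 e, ∀ x ∈ Ioo l r, m ≤ a t x * lam + b t x := fun t ht x hx =>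
    hmlam.trans (add_le_add (mul_le_mul_of_nonneg_right (ha t ht x hx) hlam.le) (hb t ht x hx))
  have hsum := hz.add (isSupersolution_hopfBarrier hq.le hlam.le hspeed)
  have hel : hopfBarrier q lam m r e l = 0 := by simp [hopfBarrier, hme]
  have hnonneg : ∀ x ∈ Icc l r, 0 ≤ z e x + hopfBarrier q lam m r e x := fun x hx =>
    hsum.nonneg (fun t ht x hx => ha₀.le.trans (ha t ht x hx))
      (fun x hx => add_nonneg (hz₀ x hx) (hopfBarrier_nonneg hq.le hlam.le (by linarith [hx.2])))
      (fun t ht => add_nonneg (hzl t ht) (hopfBarrier_nonneg hq.le hlam.le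
        (by linarith [mul_le_mul_of_nonneg_left ht.2 hm.le])))
      (fun t ht => by
        have hbarrier := neg_mul_le_hopfBarrier_right (r := r) hq.le hlam.le hm.le ht
        rw [hqc] at hbarrier
        linarith [hzr t ht])
      ⟨he.le, le_rfl⟩ hx
  have hslope : 0 ≤ deriv (z e) l + -(q * lam) := by
    have hbarrier := hasDerivAt_hopfBarrier_space q lam m r e l
    rw [hme, sub_add_sub_cancel, sub_self, mul_zero, Real.exp_zero, mul_one] at hbarrier
    refine nonneg_of_hasDerivWithinAt_Ioi (hd.hasDerivAt.add hbarrier).hasDerivWithinAt ?_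
    filter_upwards [Ioo_mem_nhdsGT hlr] with x hx
    simpa [hzel, hel] using hnonneg x (Ioo_subset_Icc_self hx)
  linarith [mul_pos hq hlam]

namespace IsClassicalSolution

variable {T : ℝ} {b σ f : ℝ → ℝ} {u : ℝ → ℝ → ℝ}

lemma neg (hu : IsClassicalSolution T b σ f u) :
    IsClassicalSolution T b σ (fun x => -f x) (fun t x => -u t x) := by
  obtain ⟨hcont, hdt, hdx, hdxx, hct, hcx, hcxx, hpde, hinit⟩ := hu
  have hderiv₂ : ∀ t x, deriv (deriv fun y => -u t y) x = -deriv (deriv fun y => u t y) x := by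
    intro t x
    rw [deriv.fun_neg', deriv.fun_neg]
  refine ⟨hcont.neg, fun t ht x => (hdt t ht x).neg, fun t ht x => (hdx t ht x).neg,
    fun t ht x => ?_, ?_, ?_, ?_, fun t ht x => ?_, fun x => congrArg Neg.neg (hinit x)⟩
  · rw [deriv.fun_neg']
    exact (hdxx t ht x).neg
  · simpa only [deriv.fun_neg] using hct.fun_neg
  · simpa only [deriv.fun_neg] using hcx.fun_neg
  · simpa only [hderiv₂] using hcxx.fun_neg
  · rw [hderiv₂, deriv.fun_neg, deriv.fun_neg, hpde t ht x]
    ring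

lemma reflect (hu : IsClassicalSolution T b σ f u) :
    IsClassicalSolution T (fun x => -b (-x)) (fun x => σ (-x)) (fun x => f (-x))
      (fun t x => u t (-x)) := by
  obtain ⟨hcont, hdt, hdx, hdxx, hct, hcx, hcxx, hpde, hinit⟩ := hu
  have hderiv : ∀ t, deriv (fun y => u t (-y)) = fun x => -deriv (fun y => u t y) (-x) :=
    fun t => funext fun x => deriv_comp_neg (fun y => u t y) x
  have hderiv₂ : ∀ t x,
      deriv (deriv fun y => u t (-y)) x = deriv (deriv fun y => u t y) (-x) := by
    intro t x
    rw [hderiv, deriv.fun_neg, deriv_comp_neg (deriv fun y => u t y) x, neg_neg]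
  have hneg : ContinuousOn (fun p : ℝ × ℝ => (p.1, -p.2)) (Ico 0 T ×ˢ univ) := by fun_prop
  have hmaps : MapsTo (fun p : ℝ × ℝ => (p.1, -p.2)) (Ico 0 T ×ˢ univ) (Ico 0 T ×ˢ univ) :=
    fun p hp => ⟨hp.1, mem_univ _⟩
  refine ⟨hcont.comp hneg hmaps, fun t ht x => hdt t ht (-x), fun t ht x => ?_, fun t ht x => ?_,
    hct.comp hneg hmaps, ?_, ?_, fun t ht x => ?_, fun x => hinit (-x)⟩
  · exact (hdx t ht (-x)).comp x differentiable_neg.differentiableAt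
  · rw [hderiv]
    exact ((hdxx t ht (-x)).comp x differentiable_neg.differentiableAt).neg
  · simpa only [hderiv, Function.comp_def] using (hcx.comp hneg hmaps).fun_neg
  · simpa only [hderiv₂, Function.comp_def] using hcxx.comp hneg hmaps
  · rw [hderiv₂, hderiv, hpde t ht (-x)]
    ring

lemma eq_initial (hu : IsClassicalSolution T b σ f u) : u 0 = f :=
  funext hu.2.2.2.2.2.2.2.2

lemma differentiableAt_space (hu : IsClassicalSolution T b σ f u) {t : ℝ} (ht : t ∈ Ico 0 T)
    (x : ℝ) : DifferentiableAt ℝ (u t) x :=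
  hu.2.2.1 t ht x

lemma continuous_deriv_initial (hu : IsClassicalSolution T b σ f u) (hT : 0 < T) :
    Continuous (deriv f) := by
  have hdiff : Differentiable ℝ (deriv (u 0)) := fun x => hu.2.2.2.1 0 ⟨le_rfl, hT⟩ x
  exact hu.eq_initial ▸ hdiff.continuous

lemma hasDerivAt_time_zero (hu : IsClassicalSolution T b σ f u) (hT : 0 < T) (x : ℝ) :
    HasDerivAt (fun t => u t x) ((1 / 2) * (σ x) ^ 2 * deriv (deriv f) x + b x * deriv f x) 0 := by
  obtain ⟨-, hdt, -, -, -, -, -, hpde, -⟩ := id hu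
  have h₀ : (0 : ℝ) ∈ Ico 0 T := ⟨le_rfl, hT⟩
  have hpde₀ := hpde 0 h₀ x
  rw [hu.eq_initial] at hpde₀
  exact hpde₀ ▸ (hdt 0 h₀ x).hasDerivAt

lemma isSupersolution {β : ℝ → ℝ → ℝ} {e l r : ℝ} (hu : IsClassicalSolution T b σ f u) (heT : e < T)
    (hβ : ∀ t ∈ Ioc 0 e, ∀ x ∈ Ioo l r, β t x * deriv (u t) x ≤ b x * deriv (u t) x) :
    IsSupersolution (fun _ x => (1 / 2) * (σ x) ^ 2) β e l r u := by
  obtain ⟨hcont, hdt, hdx, hdxx, -, -, -, hpde, -⟩ := hu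
  have hIcc : Icc 0 e ⊆ Ico 0 T := fun t ht => ⟨ht.1, ht.2.trans_lt heT⟩
  have hIoc : Ioc 0 e ⊆ Ico 0 T := Ioc_subset_Icc_self.trans hIcc
  refine ⟨hcont.mono (prod_mono hIcc (subset_univ _)), fun t ht x _ => hdt t (hIoc ht) x,
    fun t ht x _ => hdx t (hIoc ht) x, fun t ht x _ => hdxx t (hIoc ht) x, fun t ht x hx => ?_⟩
  rw [hpde t (hIoc ht) x]
  exact add_le_add_right (hβ t ht x hx) _

lemma continuous_drift (hu : IsClassicalSolution T b σ f u) (hT : 0 < T) (hσ : Continuous σ)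
    (hf : ∀ x, deriv f x ≠ 0) : Continuous b := by
  obtain ⟨-, -, -, -, hct, -, hcxx, hpde, -⟩ := id hu
  have h₀ : (0 : ℝ) ∈ Ico 0 T := ⟨le_rfl, hT⟩
  have hline : Continuous fun x : ℝ => ((0 : ℝ), x) := by fun_prop
  have hdt : Continuous fun x => deriv (fun s => u s x) 0 :=
    hct.comp_continuous hline fun _ => ⟨h₀, mem_univ _⟩
  have hdxx : Continuous fun x => deriv (deriv (u 0)) x :=
    hcxx.comp_continuous hline fun _ => ⟨h₀, mem_univ _⟩
  have hb : b = fun x => (deriv (fun s => u s x) 0 - (1 / 2) * (σ x) ^ 2 * deriv (deriv (u 0)) x)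
      / deriv f x := by
    funext x
    rw [hpde 0 h₀ x, add_sub_cancel_left, hu.eq_initial, mul_div_cancel_right₀ _ (hf x)]
  rw [hb]
  exact (hdt.sub (((hσ.pow 2).const_mul _).mul hdxx)).div (hu.continuous_deriv_initial hT) hf

lemma eventually_deriv_mul_deriv_pos (hu : IsClassicalSolution T b σ f u) (hT : 0 < T) {K : Set ℝ}
    (hK : IsCompact K) (hf : ∀ x ∈ K, deriv f x ≠ 0) :
    ∀ᶠ t in 𝓝[>] 0, ∀ x ∈ K, 0 < deriv (u t) x * deriv f x := by
  obtain ⟨-, -, -, -, -, hcx, -, -, -⟩ := id hu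
  have hcont : ContinuousOn (fun p : ℝ × ℝ => deriv (u p.1) p.2 * deriv f p.2)
      (Ico 0 T ×ˢ univ) :=
    hcx.mul ((hu.continuous_deriv_initial hT).comp continuous_snd).continuousOn
  have hnhds : ∀ᶠ t in 𝓝 0, ∀ x ∈ K, t ∈ Ico 0 T → 0 < deriv (u t) x * deriv f x := by
    refine hK.eventually_forall_of_forall_eventually fun x hx => ?_
    have hpos : 0 < deriv (u 0) x * deriv f x := by
      rw [hu.eq_initial]
      exact mul_self_pos.2 (hf x hx)
    have hev := (hcont (0, x) ⟨⟨le_rfl, hT⟩, mem_univ _⟩).eventually_const_lt hpos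
    filter_upwards [eventually_nhdsWithin_iff.1 hev] with p hp ht using hp ⟨ht, mem_univ _⟩
  filter_upwards [nhdsWithin_le_nhds hnhds, Ioo_mem_nhdsGT hT] with t ht htT x hx
  exact ht x hx ⟨htT.1.le, htT.2⟩

variable {bt : ℝ → ℝ} {ut : ℝ → ℝ → ℝ}

lemma isSupersolution_sub {e l r : ℝ}
    (hu : IsClassicalSolution T b σ f u) (hut : IsClassicalSolution T bt σ f ut) (heT : e < T)
    (hsource : ∀ t ∈ Ioc 0 e, ∀ x ∈ Ioo l r, 0 ≤ (b x - bt x) * deriv (ut t) x) :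
    IsSupersolution (fun _ x => (1 / 2) * (σ x) ^ 2) (fun _ => b) e l r
      (fun t x => u t x - ut t x) := by
  have hneg := hut.neg.isSupersolution (β := fun _ => b) heT fun t ht x hx => by
    rw [deriv.fun_neg]
    linarith [hsource t ht x hx]
  simpa only [sub_eq_add_neg] using (hu.isSupersolution heT fun _ _ _ _ => le_rfl).add hneg

lemma deriv_lt_deriv_left {e l r c : ℝ} (hu : IsClassicalSolution T b σ f u)
    (hut : IsClassicalSolution T bt σ f ut) (he : 0 < e) (heT : e < T) (hlr : l < r)
    (hσ : ContinuousOn σ (Icc l r)) (hσ₀ : ∀ x ∈ Icc l r, σ x ≠ 0) (hb : BddBelow (b '' Icc l r))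
    (hsource : ∀ t ∈ Ioc 0 e, ∀ x ∈ Ioo l r, 0 ≤ (b x - bt x) * deriv (ut t) x) (hc : 0 < c)
    (hleft : ∀ t ∈ Ioc 0 e, ut t l ≤ u t l) (hright : ∀ t ∈ Ioc 0 e, c * t ≤ u t r - ut t r)
    (heq : u e l = ut e l) : deriv (ut e) l < deriv (u e) l := by
  obtain ⟨a₀, ha₀, ha⟩ := isCompact_Icc.exists_forall_le' (s := Icc l r)
    (f := fun x => (1 / 2) * (σ x) ^ 2) (by fun_prop) (a := 0)
    fun x hx => mul_pos one_half_pos (sq_pos_of_ne_zero (hσ₀ x hx))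
  obtain ⟨B, hB⟩ := hb
  have hinit : ∀ x, u 0 x - ut 0 x = 0 := fun x => by rw [hu.eq_initial, hut.eq_initial, sub_self]
  have hdu : DifferentiableAt ℝ (u e) l := hu.differentiableAt_space ⟨he.le, heT⟩ l
  have hdut : DifferentiableAt ℝ (ut e) l := hut.differentiableAt_space ⟨he.le, heT⟩ l
  have hpos : 0 < deriv (fun x => u e x - ut e x) l := by
    refine (hu.isSupersolution_sub hut heT hsource).deriv_pos_left he hlr ha₀
      (fun t _ x hx => ha x (Ioo_subset_Icc_self hx))
      (fun t _ x hx => hB (mem_image_of_mem b (Ioo_subset_Icc_self hx))) hc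
      (fun x _ => (hinit x).ge) (fun t ht => ?_) (fun t ht => ?_) (sub_eq_zero.2 heq)
      (hdu.sub hdut)
    · rcases ht.1.eq_or_lt with rfl | ht₀
      · exact (hinit l).ge
      · exact sub_nonneg.2 (hleft t ⟨ht₀, ht.2⟩)
    · rcases ht.1.eq_or_lt with rfl | ht₀
      · rw [mul_zero, hinit r]
      · exact hright t ⟨ht₀, ht.2⟩
  rwa [deriv_fun_sub hdu hdut, sub_pos] at hpos

lemma eventually_mul_lt_sub {c x : ℝ}
    (hu : IsClassicalSolution T b σ f u) (hut : IsClassicalSolution T bt σ f ut) (hT : 0 < T)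
    (hc : c < (b x - bt x) * deriv f x) : ∀ᶠ t in 𝓝[>] 0, c * t < u t x - ut t x := by
  have hderiv : HasDerivAt (fun t => u t x - ut t x) ((b x - bt x) * deriv f x) 0 :=
    ((hu.hasDerivAt_time_zero hT x).sub (hut.hasDerivAt_time_zero hT x)).congr_deriv (by ring)
  filter_upwards [eventually_mul_sub_lt_sub_of_hasDerivWithinAt_Ioi hderiv.hasDerivWithinAt hc]
    with t ht
  simpa only [hu.eq_initial, hut.eq_initial, sub_self, sub_zero] using ht

end IsClassicalSolution

/-- `u` and `ut` have the same value and the same space derivative at `x₀` at all small positive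
times: the part of the observation on a space-time cylinder that determines the drift. -/
def SameCauchyData (u ut : ℝ → ℝ → ℝ) (x₀ : ℝ) : Prop :=
  ∀ᶠ t in 𝓝[>] 0, u t x₀ = ut t x₀ ∧ deriv (u t) x₀ = deriv (ut t) x₀

namespace SameCauchyData

variable {u ut : ℝ → ℝ → ℝ} {x₀ : ℝ}

lemma symm (h : SameCauchyData u ut x₀) : SameCauchyData ut u x₀ := by
  filter_upwards [h] with t ht using ⟨ht.1.symm, ht.2.symm⟩

lemma reflect (h : SameCauchyData u ut x₀) :
    SameCauchyData (fun t x => u t (-x)) (fun t x => ut t (-x)) (-x₀) := by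
  filter_upwards [h] with t ht
  rw [deriv_comp_neg (u t), deriv_comp_neg (ut t), neg_neg]
  exact ⟨ht.1, congrArg Neg.neg ht.2⟩

lemma of_eqOn_isOpen {ω : Set ℝ} {ε : ℝ} (hε : 0 < ε) (hω : IsOpen ω) (hx₀ : x₀ ∈ ω)
    (h : ∀ t ∈ Ioo 0 ε, ∀ x ∈ ω, u t x = ut t x) : SameCauchyData u ut x₀ := by
  filter_upwards [Ioo_mem_nhdsGT hε] with t ht
  have heq : u t =ᶠ[𝓝 x₀] ut t := (hω.eventually_mem hx₀).mono (h t ht)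
  exact ⟨heq.eq_of_nhds, heq.deriv_eq⟩

end SameCauchyData

section Drift

variable {T x₀ : ℝ} {σ b bt f : ℝ → ℝ} {u ut : ℝ → ℝ → ℝ}

lemma drift_sub_mul_deriv_nonpos {r : ℝ} (hT : 0 < T) (hσ : Continuous σ) (hσ₀ : ∀ x, σ x ≠ 0)
    (hf : ∀ x, deriv f x ≠ 0) (hu : IsClassicalSolution T b σ f u)
    (hut : IsClassicalSolution T bt σ f ut) (hcauchy : SameCauchyData u ut x₀) (hr : x₀ < r)
    (hsign : ∀ x ∈ Ioo x₀ r, 0 ≤ (b x - bt x) * deriv f x) :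
    (b r - bt r) * deriv f r ≤ 0 := by
  by_contra! hpos
  have hgrowth := hu.eventually_mul_lt_sub hut hT (half_lt_self hpos)
  have hderiv := hut.eventually_deriv_mul_deriv_pos hT (isCompact_Icc (a := x₀) (b := r))
    fun x _ => hf x
  obtain ⟨e, he, hIoc⟩ := mem_nhdsGT_iff_exists_Ioc_subset.1
    ((hgrowth.and hderiv).and (hcauchy.and (Ioo_mem_nhdsGT hT)))
  obtain ⟨-, ⟨hvalue, hslope⟩, -, heT⟩ := hIoc ⟨he, le_rfl⟩
  have hsource : ∀ t ∈ Ioc 0 e, ∀ x ∈ Ioo x₀ r, 0 ≤ (b x - bt x) * deriv (ut t) x := by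
    intro t ht x hx
    have hprod := mul_nonneg (hsign x hx) ((hIoc ht).1.2 x (Ioo_subset_Icc_self hx)).le
    refine nonneg_of_mul_nonneg_left (b := deriv f x ^ 2) ?_ (sq_pos_of_ne_zero (hf x))
    linear_combination hprod
  refine (hu.deriv_lt_deriv_left hut he heT hr hσ.continuousOn (fun x _ => hσ₀ x) ?_ hsource
    (half_pos hpos) (fun t ht => (hIoc ht).2.1.1.ge) (fun t ht => (hIoc ht).1.1.le) hvalue).ne'
    hslope
  exact isCompact_Icc.bddBelow_image (hu.continuous_drift hT hσ hf).continuousOn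

lemma eqOn_drift_of_nonneg {r : ℝ} (hT : 0 < T) (hσ : Continuous σ) (hσ₀ : ∀ x, σ x ≠ 0)
    (hf : ∀ x, deriv f x ≠ 0) (hu : IsClassicalSolution T b σ f u)
    (hut : IsClassicalSolution T bt σ f ut) (hcauchy : SameCauchyData u ut x₀) (hr : x₀ < r)
    (hsign : ∀ x ∈ Icc x₀ r, 0 ≤ (b x - bt x) * deriv f x) : EqOn b bt (Icc x₀ r) := by
  have hIoc : EqOn b bt (Ioc x₀ r) := by
    intro x hx
    have hle := drift_sub_mul_deriv_nonpos hT hσ hσ₀ hf hu hut hcauchy hx.1 fun y hy =>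
      hsign y ⟨hy.1.le, hy.2.le.trans hx.2⟩
    have hzero := hle.antisymm (hsign x (Ioc_subset_Icc_self hx))
    exact sub_eq_zero.1 ((mul_eq_zero.1 hzero).resolve_right (hf x))
  exact hIoc.of_subset_closure (hu.continuous_drift hT hσ hf).continuousOn
    (hut.continuous_drift hT hσ hf).continuousOn Ioc_subset_Icc_self (closure_Ioc hr.ne).ge

lemma eqOn_drift_of_nonneg_or_nonpos {r : ℝ} (hT : 0 < T) (hσ : Continuous σ)
    (hσ₀ : ∀ x, σ x ≠ 0) (hf : ∀ x, deriv f x ≠ 0) (hu : IsClassicalSolution T b σ f u)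
    (hut : IsClassicalSolution T bt σ f ut) (hcauchy : SameCauchyData u ut x₀) (hr : x₀ < r)
    (hsign : (∀ x ∈ Icc x₀ r, 0 ≤ (b x - bt x) * deriv f x) ∨
      ∀ x ∈ Icc x₀ r, (b x - bt x) * deriv f x ≤ 0) : EqOn b bt (Icc x₀ r) := by
  rcases hsign with hnonneg | hnonpos
  · exact eqOn_drift_of_nonneg hT hσ hσ₀ hf hu hut hcauchy hr hnonneg
  · refine (eqOn_drift_of_nonneg hT hσ hσ₀ hf hut hu hcauchy.symm hr fun x hx => ?_).symm
    linarith [hnonpos x hx]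

theorem eqOn_drift_Ici (hT : 0 < T) (hσ : Continuous σ) (hσ₀ : ∀ x, σ x ≠ 0)
    (hright : ∀ x, AnalyticWithinAt ℝ (fun y => b y - bt y) (Ici x) x)
    (hf : ∀ x, deriv f x ≠ 0) (hu : IsClassicalSolution T b σ f u)
    (hut : IsClassicalSolution T bt σ f ut) (hcauchy : SameCauchyData u ut x₀) :
    EqOn b bt (Ici x₀) := by
  refine eqOn_Ici_of_forall_exists_gt fun z hz hbefore => ?_
  have hextend : ∀ p : ℝ → Prop, p 0 → (∀ᶠ x in 𝓝[≥] z, p ((b x - bt x) * deriv f x)) →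
      ∃ r > z, ∀ x ∈ Icc x₀ r, p ((b x - bt x) * deriv f x) := by
    intro p hp₀ hp
    obtain ⟨r, hzr, hpr⟩ := mem_nhdsGE_iff_exists_Icc_subset.1 hp
    refine ⟨r, hzr, fun x hx => ?_⟩
    rcases lt_or_ge x z with hxz | hzx
    · rwa [hbefore ⟨hx.1, hxz⟩, sub_self, zero_mul]
    · exact hpr ⟨hzx, hx.2⟩
  obtain ⟨r, hzr, hsign⟩ : ∃ r > z, (∀ x ∈ Icc x₀ r, 0 ≤ (b x - bt x) * deriv f x) ∨
      ∀ x ∈ Icc x₀ r, (b x - bt x) * deriv f x ≤ 0 := by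
    rcases eventually_mul_nonneg_or_eventually_mul_nonpos_nhdsGE (hright z)
      (hu.continuous_deriv_initial hT).continuousAt (hf z) with hnonneg | hnonpos
    · exact (hextend (0 ≤ ·) le_rfl hnonneg).imp fun r h => h.imp_right Or.inl
    · exact (hextend (· ≤ 0) le_rfl hnonpos).imp fun r h => h.imp_right Or.inr
  exact ⟨r, hzr, eqOn_drift_of_nonneg_or_nonpos hT hσ hσ₀ hf hu hut hcauchy (hz.trans_lt hzr) hsign⟩

theorem drift_uniqueness_general (hT : 0 < T) (hσ : Continuous σ) (hσ₀ : ∀ x, σ x ≠ 0)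
    (hright : ∀ x, AnalyticWithinAt ℝ (fun y => b y - bt y) (Ici x) x)
    (hleft : ∀ x, AnalyticWithinAt ℝ (fun y => b y - bt y) (Iic x) x)
    (hf : ∀ x, deriv f x ≠ 0) (hu : IsClassicalSolution T b σ f u)
    (hut : IsClassicalSolution T bt σ f ut) (hcauchy : SameCauchyData u ut x₀) :
    ∀ x, b x = bt x := by
  intro x
  rcases le_total x₀ x with hx | hx
  · exact eqOn_drift_Ici hT hσ hσ₀ hright hf hu hut hcauchy hx
  have hright' : ∀ y, AnalyticWithinAt ℝ (fun y => -b (-y) - -bt (-y)) (Ici y) y := fun y => by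
    simpa only [Pi.neg_def, neg_sub, neg_sub_neg] using
      (analyticWithinAt_Ici_comp_neg (hleft (-y))).neg
  have hf' : ∀ y, deriv (fun y => f (-y)) y ≠ 0 := fun y => by
    rw [deriv_comp_neg f]
    exact neg_ne_zero.2 (hf (-y))
  have hreflect := eqOn_drift_Ici hT (hσ.comp continuous_neg) (fun y => hσ₀ (-y))
    hright' hf' hu.reflect hut.reflect hcauchy.reflect (neg_le_neg hx)
  simpa using hreflect

end Drift

/-- Theorem 1: with known diffusion coefficient, the drift is uniquely determined by
observation of the solution on a small time-space cylinder. -/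
theorem drift_uniqueness
    (T : ℝ) (hT : 0 < T)
    (sigma b bt : ℝ → ℝ)
    (hsLip : ∃ K, LipschitzWith K sigma) (hspos : ∀ x, 0 < sigma x)
    (hb : ClassM b) (hbt : ClassM bt)
    (f : ℝ → ℝ) (hf : ContDiff ℝ 2 f) (hfd : ∀ x, deriv f x ≠ 0)
    (u ut : ℝ → ℝ → ℝ)
    (hu : IsClassicalSolution T b sigma f u)
    (hut : IsClassicalSolution T bt sigma f ut)
    (ε : ℝ) (hε : ε ∈ Ioo 0 T)
    (ω : Set ℝ) (hω : IsOpen ω) (hωne : ω.Nonempty)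
    (hobs : ∀ t ∈ Ioo 0 ε, ∀ x ∈ ω, u t x = ut t x) :
    ∀ x : ℝ, b x = bt x := by
  obtain ⟨x₀, hx₀⟩ := hωne
  obtain ⟨⟨_, hbLip⟩, hbM⟩ := hb
  obtain ⟨⟨_, hbtLip⟩, hbtM⟩ := hbt
  obtain ⟨_, hsLip⟩ := hsLip
  exact drift_uniqueness_general hT hsLip.continuous (fun x => (hspos x).ne')
    (fun x => (hbM.analyticWithinAt_Ici x).sub (hbtM.analyticWithinAt_Ici x))
    (fun x => (hbM.analyticWithinAt_Iic hbLip.continuous x).sub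
      (hbtM.analyticWithinAt_Iic hbtLip.continuous x))
    hfd hu hut (.of_eqOn_isOpen hε.1 hω hx₀ hobs)
end

section
/- Let T > 0, let b : ℝ → ℝ be Lipschitz continuous, let σ and σ̃ belong to the class M with σ(x) > 0 and σ̃(x) > 0 for all x, and let f : ℝ → ℝ be of class C² with f''(x) ≠ 0 for all x ∈ ℝ. Let u be a classical solution of the parabolic equation associated with (b, σ, f) and let ũ be a classical solution of the parabolic equation associated with (b, σ̃, f). If there exist ε ∈ (0, T) and a nonempty open set ω ⊂ ℝ such that u(t,x) = ũ(t,x) for all t ∈ (0, ε) and all x ∈ ω, then σ(x) = σ̃(x) for all x ∈ ℝ. -/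
open Set Filter

/-!
Let `w = u - v` be the difference of the solutions with diffusion coefficients `σ` and `τ`. It
vanishes at `t = 0`, has zero Cauchy data on the line `x = p`, and solves
`∂ₜ w = (σ²/2) ∂ₓₓ w + b ∂ₓ w + g` with `g = (σ² - τ²)/2 · ∂ₓₓ v`. For short times `∂ₓₓ v` has the
sign of `f''`, so `g` has the sign of `q = (σ² - τ²) f''`.

If `σ ≠ τ` somewhere to the right of `p`, analyticity from the right at the first point of
difference `c` gives `d > c` such that `q` vanishes on `[p, c)` and has a constant strict sign on
`(c, d]`; exchanging the solutions, we may assume `q > 0` there. The truncated Laplace transform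
`W(x) = ∫₀ᵉ e^{-μ²t} w(t, x) dt` solves, with zero Cauchy data at `p`, the equation
`(σ²/2) W'' + b W' - μ² W = e^{-μ²e} w(e, ·) - G`, where `G ≥ 0` is the transform of `g`, and
`G ≳ e^{-μ²e/2}` near `d`. The boundary term contributes to `W(d)` at most
`e^{-μ²e} e^{kμ(d-p)}`, which is negligible against `e^{-μ²e/2}` for large `μ`; hence `W(d) < 0`.
But `∂ₜ w(0, d) = g(0, d) > 0` makes `w(·, d) > 0` just after `t = 0`, so `W(d) ≥ 0` for small `e`.
The left side follows by reflection.
-/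

open Function
open scoped Topology

section Analyticity

theorem eventuallyEq_zero_or_eventually_ne_zero_of_analyticWithinAt {𝕜 E : Type*}
    [NontriviallyNormedField 𝕜] [NormedAddCommGroup E] [NormedSpace 𝕜 E] [CompleteSpace E]
    {f : 𝕜 → E} {s : Set 𝕜} {z : 𝕜} (hf : AnalyticWithinAt 𝕜 f s z) :
    f =ᶠ[𝓝[insert z s] z] 0 ∨ ∀ᶠ x in 𝓝[s \ {z}] z, f x ≠ 0 := by
  obtain ⟨g, hfg, hg⟩ := analyticWithinAt_iff_exists_analyticAt.1 hf
  refine hg.eventually_eq_zero_or_eventually_ne_zero.imp (fun hzero ↦ ?_) fun hne ↦ ?_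
  · exact hfg.trans (hzero.filter_mono nhdsWithin_le_nhds)
  · have hfg' : f =ᶠ[𝓝[s \ {z}] z] g :=
      hfg.filter_mono (nhdsWithin_mono z (sdiff_subset.trans (subset_insert z s)))
    filter_upwards [hfg', hne.filter_mono (nhdsWithin_mono z fun x hx ↦ hx.2)] with x hx hgx
    rwa [hx]

/-- Analyticity up to each point from the right and from the left. For continuous functions this
is piecewise analyticity with locally finitely many breakpoints, without a lower bound on their
spacing. -/
def OneSidedAnalytic (ψ : ℝ → ℝ) : Prop :=
  ∀ c, AnalyticWithinAt ℝ ψ (Ici c) c ∧ AnalyticWithinAt ℝ ψ (Iic c) c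

theorem OneSidedAnalytic.continuous {ψ : ℝ → ℝ} (h : OneSidedAnalytic ψ) : Continuous ψ :=
  continuous_iff_continuousAt.2 fun c ↦ continuousAt_iff_continuous_left_right.2
    ⟨(h c).2.continuousWithinAt, (h c).1.continuousWithinAt⟩

theorem OneSidedAnalytic.comp_neg {ψ : ℝ → ℝ} (h : OneSidedAnalytic ψ) :
    OneSidedAnalytic fun x ↦ ψ (-x) := fun c ↦
  ⟨(h (-c)).2.comp analyticAt_id.neg.analyticWithinAt fun _ hx ↦ neg_le_neg (mem_Ici.1 hx),
    (h (-c)).1.comp analyticAt_id.neg.analyticWithinAt fun _ hx ↦ neg_le_neg (mem_Iic.1 hx)⟩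

theorem OneSidedAnalytic.exists_forall_mem_Ioc_ne {φ ψ : ℝ → ℝ} {c : ℝ} (hφ : OneSidedAnalytic φ)
    (hψ : OneSidedAnalytic ψ) (hne : ∃ᶠ x in 𝓝[≥] c, φ x ≠ ψ x) :
    ∃ d > c, ∀ x ∈ Ioc c d, φ x ≠ ψ x := by
  rcases eventuallyEq_zero_or_eventually_ne_zero_of_analyticWithinAt ((hφ c).1.sub (hψ c).1)
    with heq | hdiff
  · rw [insert_eq_of_mem self_mem_Ici] at heq
    exact absurd (heq.mono fun x hx ↦ not_not.2 (sub_eq_zero.1 hx)) hne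
  · rw [Ici_sdiff_left] at hdiff
    obtain ⟨d, hcd, hd⟩ := mem_nhdsGT_iff_exists_Ioc_subset.1 hdiff
    exact ⟨d, hcd, fun x hx ↦ sub_ne_zero.1 (hd hx)⟩

variable {α : Type*} [LinearOrder α] {κ : ℤ → α}

theorem exists_mem_Ico_map_add_one [NoMaxOrder α] (hκ : Monotone κ) (hbot : Tendsto κ atBot atBot)
    (htop : Tendsto κ atTop atTop) (c : α) : ∃ j, c ∈ Ico (κ j) (κ (j + 1)) := by
  obtain ⟨i, hi⟩ := (hbot.eventually (eventually_le_atBot c)).exists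
  have hunbdd : ¬BddAbove (κ '' Ici i) := fun ⟨M, hM⟩ ↦ by
    obtain ⟨j, hMj, hij⟩ := ((htop.eventually_gt_atTop M).and (eventually_ge_atTop i)).exists
    exact (hM (mem_image_of_mem κ hij)).not_gt hMj
  have hc : c ∈ ⋃ j ∈ Ici i, Ico (κ j) (κ (Order.succ j)) :=
    (biUnion_Ici_Ico_map_succ (fun j hj ↦ hκ hj) hunbdd).ge hi
  obtain ⟨j, -, hj⟩ := mem_iUnion₂.1 hc
  exact ⟨j, hj⟩

theorem exists_mem_Ioc_map_add_one [NoMaxOrder α] (hκ : StrictMono κ)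
    (hbot : Tendsto κ atBot atBot) (htop : Tendsto κ atTop atTop) (c : α) :
    ∃ j, c ∈ Ioc (κ j) (κ (j + 1)) := by
  obtain ⟨j, hj⟩ := exists_mem_Ico_map_add_one hκ.monotone hbot htop c
  rcases hj.1.eq_or_lt with rfl | hlt
  · exact ⟨j - 1, hκ (sub_one_lt j), by rw [sub_add_cancel]⟩
  · exact ⟨j, hlt, hj.2.le⟩

theorem PiecewiseAnalytic.oneSidedAnalytic {ψ : ℝ → ℝ} (h : PiecewiseAnalytic ψ)
    (hψ : Continuous ψ) : OneSidedAnalytic ψ := by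
  obtain ⟨-, κ, φ, -, hκ, hbot, htop, -, hφ, hψφ⟩ := h
  refine fun c ↦ ⟨?_, ?_⟩
  · obtain ⟨j, hj⟩ := exists_mem_Ico_map_add_one hκ.monotone hbot htop c
    have hright : Ico c (κ (j + 1)) ∈ 𝓝[≥] c := Ico_mem_nhdsGE hj.2
    refine ((hφ j c (Ico_subset_Icc_self hj)).mono_of_mem_nhdsWithin (mem_of_superset hright
      fun x hx ↦ ⟨hj.1.trans hx.1, hx.2.le⟩)).congr_of_eventuallyEq ?_ (hψφ j c hj)
    exact mem_of_superset hright fun x hx ↦ hψφ j x ⟨hj.1.trans hx.1, hx.2⟩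
  · obtain ⟨j, hj⟩ := exists_mem_Ioc_map_add_one hκ hbot htop c
    have hψφc : EqOn ψ (φ j) (Icc (κ j) (κ (j + 1))) :=
      EqOn.of_subset_closure (hψφ j) hψ.continuousOn (hφ j).continuousOn Ico_subset_Icc_self
        (closure_Ico (hκ (lt_add_one j)).ne).ge
    have hleft : Icc (κ j) (κ (j + 1)) ∈ 𝓝[≤] c := mem_of_superset (Ioc_mem_nhdsLE hj.1)
      fun x hx ↦ ⟨hx.1.le, hx.2.trans hj.2⟩
    exact ((hφ j c (Ioc_subset_Icc_self hj)).mono_of_mem_nhdsWithin hleft).congr_of_eventuallyEq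
      (mem_of_superset hleft hψφc) (hψφc (Ioc_subset_Icc_self hj))

theorem ClassM.oneSidedAnalytic {ψ : ℝ → ℝ} (h : ClassM ψ) : OneSidedAnalytic ψ :=
  have ⟨⟨_, hlip⟩, hpw⟩ := h
  hpw.oneSidedAnalytic hlip.continuous

end Analyticity

theorem forall_pos_or_forall_neg_of_isPreconnected {X : Type*} [TopologicalSpace X] {f : X → ℝ}
    {s : Set X} (hs : IsPreconnected s) (hf : ContinuousOn f s) (hne : ∀ x ∈ s, f x ≠ 0) :
    (∀ x ∈ s, 0 < f x) ∨ ∀ x ∈ s, f x < 0 := by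
  by_contra! h
  obtain ⟨⟨x, hx, hfx⟩, y, hy, hfy⟩ := h
  obtain ⟨z, hz, hfz⟩ := hs.intermediate_value hx hy hf ⟨hfx, hfy⟩
  exact hne z hz hfz

theorem exists_first_difference {β : Type*} {f g : ℝ → β} {p y : ℝ} (hpy : p ≤ y)
    (hy : f y ≠ g y) :
    ∃ c, p ≤ c ∧ EqOn f g (Ico p c) ∧ ∃ᶠ x in 𝓝[≥] c, f x ≠ g x := by
  set S := {x | p ≤ x ∧ f x ≠ g x}
  have hne : S.Nonempty := ⟨y, hpy, hy⟩
  have hbdd : BddBelow S := ⟨p, fun x hx ↦ hx.1⟩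
  refine ⟨sInf S, le_csInf hne fun x hx ↦ hx.1, fun x hx ↦ ?_, ?_⟩
  · by_contra hfg
    exact (csInf_le hbdd ⟨hx.1, hfg⟩).not_gt hx.2
  · have hfreq := mem_closure_iff_frequently.1 (csInf_mem_closure hne hbdd)
    refine frequently_nhdsWithin_iff.2 (hfreq.mono fun x hx ↦ ⟨hx.2, csInf_le hbdd hx⟩)

theorem eventually_forall_pos_of_initial_pos {X : Type*} [TopologicalSpace X] {h : ℝ → X → ℝ}
    {T : ℝ} {K : Set X} (hT : 0 < T) (hK : IsCompact K)
    (hcont : ContinuousOn (uncurry h) (Ico 0 T ×ˢ univ)) (hpos : ∀ x ∈ K, 0 < h 0 x) :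
    ∀ᶠ e in 𝓝[>] (0 : ℝ), ∀ t ∈ Icc 0 e, ∀ x ∈ K, 0 < h t x := by
  have hnear : ∀ᶠ t in 𝓝 (0 : ℝ), ∀ x ∈ K, t ∈ Ico 0 T → 0 < h t x := by
    refine hK.eventually_forall_of_forall_eventually fun x hx ↦ ?_
    have hx0 := (hcont (0, x) ⟨left_mem_Ico.2 hT, mem_univ x⟩).eventually_const_lt (hpos x hx)
    filter_upwards [eventually_nhdsWithin_iff.1 hx0] with z hz ht using hz ⟨ht, mem_univ _⟩
  obtain ⟨r, hr, hball⟩ := Metric.eventually_nhds_iff.1 hnear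
  filter_upwards [Ioo_mem_nhdsGT (lt_min hT hr)] with e he t ht x hx
  have hte : t < min T r := ht.2.trans_lt he.2
  have htr : dist t 0 < r := by
    rw [Real.dist_0_eq_abs, abs_of_nonneg ht.1]
    exact hte.trans_le (min_le_right T r)
  exact hball htr x hx ⟨ht.1, hte.trans_le (min_le_left T r)⟩

theorem exists_pos_forall_mem_Icc {X : Type*} [TopologicalSpace X] {f : X → ℝ} {K : Set X}
    (hK : IsCompact K) (hne : K.Nonempty) (hf : ContinuousOn f K) (hpos : ∀ x ∈ K, 0 < f x) :
    ∃ α₀ > 0, ∃ α₁, ∀ x ∈ K, f x ∈ Icc α₀ α₁ := by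
  obtain ⟨y, hyK, hy⟩ := hK.exists_isMinOn hne hf
  obtain ⟨z, -, hz⟩ := hK.exists_isMaxOn hne hf
  exact ⟨f y, hpos y hyK, f z, fun x hx ↦ ⟨hy hx, hz hx⟩⟩

section Comparison

theorem le_of_hasDerivAt_nonpos {Q Q' : ℝ → ℝ} {p z : ℝ} (hpz : p ≤ z)
    (hQ : ∀ x ∈ Icc p z, HasDerivAt Q (Q' x) x) (hQ' : ∀ x ∈ Ioo p z, Q' x ≤ 0) : Q z ≤ Q p := by
  refine antitoneOn_of_hasDerivWithinAt_nonpos (f' := Q') (convex_Icc p z)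
    (fun x hx ↦ (hQ x hx).continuousAt.continuousWithinAt)
    (fun x hx ↦ (hQ x (interior_subset hx)).hasDerivWithinAt) (fun x hx ↦ ?_)
    (left_mem_Icc.2 hpz) (right_mem_Icc.2 hpz) hpz
  rw [interior_Icc] at hx
  exact hQ' x hx

theorem neg_of_second_order_lt {Q Q' Q'' A B : ℝ → ℝ} {p q : ℝ}
    (hQ : ∀ x ∈ Icc p q, HasDerivAt Q (Q' x) x) (hQ' : ∀ x ∈ Icc p q, HasDerivAt Q' (Q'' x) x)
    (hA : ∀ x ∈ Icc p q, 0 ≤ A x) (hlt : ∀ x ∈ Icc p q, Q'' x < A x * Q x - B x * Q' x)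
    (hQp : Q p < 0) (hQ'p : Q' p < 0) : ∀ x ∈ Icc p q, Q x < 0 ∧ Q' x < 0 := by
  have neg_of_deriv_neg : ∀ z ∈ Icc p q, (∀ x ∈ Ico p z, Q' x < 0) → Q z < 0 := fun z hz hneg ↦
    (le_of_hasDerivAt_nonpos hz.1 (fun x hx ↦ hQ x ⟨hx.1, hx.2.trans hz.2⟩)
      fun x hx ↦ (hneg x (Ioo_subset_Ico_self hx)).le).trans_lt hQp
  have hQ'neg : ∀ x ∈ Icc p q, Q' x < 0 := by
    by_contra! hcon
    have hcont : ContinuousOn Q' (Icc p q) := fun x hx ↦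
      (hQ' x hx).continuousAt.continuousWithinAt
    have hclosed : IsClosed (Icc p q ∩ Q' ⁻¹' Ici 0) :=
      hcont.preimage_isClosed_of_isClosed isClosed_Icc isClosed_Ici
    obtain ⟨z, ⟨hz, hz0⟩, hleast⟩ :=
      (isCompact_Icc.of_isClosed_subset hclosed inter_subset_left).exists_isLeast hcon
    have hbefore : ∀ x ∈ Ico p z, Q' x < 0 := fun x hx ↦ by
      by_contra! hx0
      exact (hleast ⟨⟨hx.1, hx.2.le.trans hz.2⟩, hx0⟩).not_gt hx.2
    have hpz : p < z := hz.1.lt_of_ne fun h ↦ (h ▸ hQ'p).not_ge hz0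
    have hleft : ∀ᶠ x in 𝓝[<] z, Q' x < 0 :=
      mem_of_superset (Ico_mem_nhdsLT hpz) hbefore
    have hQ'z : Q' z = 0 := le_antisymm
      (le_of_tendsto (hQ' z hz).continuousAt.continuousWithinAt (hleft.mono fun _ ↦ le_of_lt)) hz0
    have hQ''z : deriv Q' z < 0 := by
      rw [(hQ' z hz).deriv]
      refine (hlt z hz).trans_le ?_
      rw [hQ'z, mul_zero, sub_zero]
      exact mul_nonpos_of_nonneg_of_nonpos (hA z hz) (neg_of_deriv_neg z hz hbefore).le
    have hsign := (eventually_nhdsWithin_sign_eq_of_deriv_neg hQ''z hQ'z).filter_mono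
      (nhdsWithin_le_nhds (s := Iio z))
    obtain ⟨x, hxsign, hxneg, hxz⟩ := (hsign.and (hleft.and self_mem_nhdsWithin)).exists
    rw [sign_neg hxneg, sign_pos (sub_pos.2 hxz)] at hxsign
    exact absurd hxsign (by decide)
  exact fun x hx ↦ ⟨neg_of_deriv_neg x hx fun y hy ↦ hQ'neg y ⟨hy.1, hy.2.le.trans hx.2⟩,
    hQ'neg x hx⟩

theorem second_order_sub_sq_lt {a b c y z L α β ρ κ r : ℝ} (ha : a ∈ Icc 0 α) (hb : |b| ≤ β)
    (hc : c ≤ ρ - κ * (2 + 2 * β * L)) (hz : z ∈ Icc 0 L) (hρ : 0 < ρ) (hρy : ρ ≤ y) (hκ : 0 ≤ κ)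
    (hr : 0 ≤ r) (hrate : α + β * r + 1 < r ^ 2) :
    a * (y - κ * z ^ 2) - b * (r * y - κ * (2 * z)) + c < r * (r * y) - κ * 2 := by
  have hy : 0 < y := hρ.trans_le hρy
  have hz0 : 0 ≤ z := hz.1
  have hay : a * y ≤ α * y := by gcongr; exact ha.2
  have hasq : 0 ≤ a * (κ * z ^ 2) := mul_nonneg ha.1 (by positivity)
  have hby : -b * (r * y) ≤ β * (r * y) := by gcongr; exact (neg_le_abs b).trans hb
  have hbz : b * (κ * (2 * z)) ≤ β * (κ * (2 * L)) :=
    calc b * (κ * (2 * z)) ≤ β * (κ * (2 * z)) := by gcongr; exact (le_abs_self b).trans hb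
      _ ≤ β * (κ * (2 * L)) := by gcongr; exacts [(abs_nonneg b).trans hb, hz.2]
  have hratey : (α + β * r + 1) * y < r ^ 2 * y := by gcongr
  linarith

theorem lt_exp_sub_sq_of_second_order_eq {W W' W'' A B C : ℝ → ℝ} {p m q α β ρ κ r : ℝ}
    (hW : ∀ x ∈ Icc m q, HasDerivAt W (W' x) x) (hW' : ∀ x ∈ Icc m q, HasDerivAt W' (W'' x) x)
    (hode : ∀ x ∈ Icc m q, W'' x = A x * W x - B x * W' x + C x)
    (hA : ∀ x ∈ Icc m q, A x ∈ Icc 0 α) (hB : ∀ x ∈ Icc m q, |B x| ≤ β)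
    (hC : ∀ x ∈ Icc m q, C x ≤ ρ - κ * (2 + 2 * β * (q - m)))
    (hpm : p ≤ m) (hρ : 0 < ρ) (hκ : 0 ≤ κ) (hr : 0 ≤ r) (hrate : α + β * r + 1 < r ^ 2)
    (hWm : W m < ρ * Real.exp (r * (m - p))) (hW'm : W' m < r * (ρ * Real.exp (r * (m - p)))) :
    ∀ x ∈ Icc m q, W x < ρ * Real.exp (r * (x - p)) - κ * (x - m) ^ 2 ∧
      W' x < r * (ρ * Real.exp (r * (x - p))) - κ * (2 * (x - m)) := by
  -- Let `E Y = Y'' + B Y' - A Y`. The rate condition gives `E (ρ e^{r(x-p)}) > ρ`; the smaller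
  -- bound on `C` leaves room to subtract `κ (x-m)²`, which lowers `E` by at most
  -- `κ (2 + 2 β (q-m))`.
  set Y : ℝ → ℝ := fun x ↦ ρ * Real.exp (r * (x - p)) with hY
  have hY' (x : ℝ) : HasDerivAt Y (r * Y x) x :=
    (((((hasDerivAt_id x).sub_const p).const_mul r).exp).const_mul ρ).congr_deriv
      (by simp only [hY, id]; ring)
  have hsq (x : ℝ) : HasDerivAt (fun x ↦ κ * (x - m) ^ 2) (κ * (2 * (x - m))) x :=
    ((((hasDerivAt_id x).sub_const m).pow 2).const_mul κ).congr_deriv (by simp)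
  have hlin (x : ℝ) : HasDerivAt (fun x ↦ κ * (2 * (x - m))) (κ * 2) x :=
    ((((hasDerivAt_id x).sub_const m).const_mul 2).const_mul κ).congr_deriv (by simp)
  have hρY : ∀ x ∈ Icc m q, ρ ≤ Y x := fun x hx ↦ le_mul_of_one_le_right hρ.le
    (Real.one_le_exp (mul_nonneg hr (sub_nonneg.2 (hpm.trans hx.1))))
  have hcmp := neg_of_second_order_lt (B := B)
    (fun x hx ↦ (hW x hx).sub ((hY' x).sub (hsq x)))
    (fun x hx ↦ (hW' x hx).sub (((hY' x).const_mul r).sub (hlin x)))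
    (fun x hx ↦ (hA x hx).1) (fun x hx ↦ ?_) (by simpa using hWm) (by simpa using hW'm)
  · exact fun x hx ↦ (hcmp x hx).imp sub_neg.1 sub_neg.1
  · have hz : x - m ∈ Icc 0 (q - m) := ⟨sub_nonneg.2 hx.1, sub_le_sub_right hx.2 m⟩
    simp only [Pi.sub_apply, hode x hx]
    linarith [second_order_sub_sq_lt (hA x hx) (hB x hx) (hC x hx) hz hρ (hρY x hx) hκ hr hrate]

theorem lt_exp_sub_sq_of_zero_cauchy_data {W W' W'' A B C : ℝ → ℝ} {p m d α β ρ κ r : ℝ}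
    (hW : ∀ x ∈ Icc p d, HasDerivAt W (W' x) x) (hW' : ∀ x ∈ Icc p d, HasDerivAt W' (W'' x) x)
    (hode : ∀ x ∈ Icc p d, W'' x = A x * W x - B x * W' x + C x)
    (hA : ∀ x ∈ Icc p d, A x ∈ Icc 0 α) (hB : ∀ x ∈ Icc p d, |B x| ≤ β)
    (hC : ∀ x ∈ Icc p d, C x ≤ ρ) (hCm : ∀ x ∈ Icc m d, C x ≤ ρ - κ * (2 + 2 * β * (d - m)))
    (hpm : p ≤ m) (hmd : m ≤ d) (hρ : 0 < ρ) (hκ : 0 ≤ κ) (hr : 0 < r)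
    (hrate : α + β * r + 1 < r ^ 2) (hWp : W p = 0) (hW'p : W' p = 0) :
    W d < ρ * Real.exp (r * (d - p)) - κ * (d - m) ^ 2 := by
  have hleft : Icc p m ⊆ Icc p d := Icc_subset_Icc_right hmd
  have hright : Icc m d ⊆ Icc p d := Icc_subset_Icc_left hpm
  obtain ⟨hWm, hW'm⟩ := lt_exp_sub_sq_of_second_order_eq (κ := 0)
    (fun x hx ↦ hW x (hleft hx)) (fun x hx ↦ hW' x (hleft hx)) (fun x hx ↦ hode x (hleft hx))
    (fun x hx ↦ hA x (hleft hx)) (fun x hx ↦ hB x (hleft hx))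
    (fun x hx ↦ by simpa using hC x (hleft hx)) le_rfl hρ le_rfl hr.le hrate
    (by simpa [hWp] using hρ) (by simpa [hW'p] using mul_pos hr hρ) m (right_mem_Icc.2 hpm)
  exact (lt_exp_sub_sq_of_second_order_eq
    (fun x hx ↦ hW x (hright hx)) (fun x hx ↦ hW' x (hright hx)) (fun x hx ↦ hode x (hright hx))
    (fun x hx ↦ hA x (hright hx)) (fun x hx ↦ hB x (hright hx)) hCm hpm hρ hκ hr.le hrate
    (by simpa using hWm) (by simpa using hW'm) d (right_mem_Icc.2 hmd)).1

theorem add_mul_add_one_lt_sq {α β μ : ℝ} (hα : 0 ≤ α) (hβ : 0 ≤ β) (hμ : 1 ≤ μ) :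
    α * μ ^ 2 + β * ((α + β + 2) * μ) + 1 < ((α + β + 2) * μ) ^ 2 := by
  have hμ2 : μ ≤ μ ^ 2 := le_self_pow₀ hμ two_ne_zero
  calc α * μ ^ 2 + β * ((α + β + 2) * μ) + 1
      ≤ α * μ ^ 2 + β * ((α + β + 2) * μ ^ 2) + μ ^ 2 := by
        gcongr
        exact hμ.trans hμ2
    _ = (α + β * (α + β + 2) + 1) * μ ^ 2 := by ring
    _ < (α + β + 2) ^ 2 * μ ^ 2 := by
        gcongr
        nlinarith [mul_nonneg hα hβ]
    _ = ((α + β + 2) * μ) ^ 2 := by ring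

theorem lt_of_resolvent_eq {W W' W'' a b G h : ℝ → ℝ} {p m d α₀ α₁ β η K μ : ℝ}
    (hW : ∀ x ∈ Icc p d, HasDerivAt W (W' x) x) (hW' : ∀ x ∈ Icc p d, HasDerivAt W' (W'' x) x)
    (hode : ∀ x ∈ Icc p d, a x * W'' x + b x * W' x + G x = h x + μ ^ 2 * W x)
    (ha : ∀ x ∈ Icc p d, (a x)⁻¹ ∈ Icc α₀ α₁) (hb : ∀ x ∈ Icc p d, |b x / a x| ≤ β)
    (hh : ∀ x ∈ Icc p d, h x ≤ η) (hG : ∀ x ∈ Icc p d, 0 ≤ G x) (hGK : ∀ x ∈ Icc m d, K ≤ G x)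
    (hpm : p ≤ m) (hmd : m ≤ d) (hα₀ : 0 < α₀) (hη : 0 < η) (hK : 0 ≤ K) (hμ : 1 ≤ μ)
    (hWp : W p = 0) (hW'p : W' p = 0) :
    W d < (α₁ + 1) * η * Real.exp ((α₁ + β + 2) * μ * (d - p)) -
      α₀ * K / (2 + 2 * β * (d - m)) * (d - m) ^ 2 := by
  have hp : p ∈ Icc p d := left_mem_Icc.2 (hpm.trans hmd)
  have hα₁ : 0 ≤ α₁ := hα₀.le.trans ((ha p hp).1.trans (ha p hp).2)
  have hβ : 0 ≤ β := (abs_nonneg _).trans (hb p hp)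
  have hden : 0 < 2 + 2 * β * (d - m) := by have := sub_nonneg.2 hmd; positivity
  have hinv : ∀ x ∈ Icc p d, 0 < (a x)⁻¹ := fun x hx ↦ hα₀.trans_le (ha x hx).1
  have hforce : ∀ x ∈ Icc p d, (a x)⁻¹ * (h x - G x) ≤ (α₁ + 1) * η - (a x)⁻¹ * G x := by
    intro x hx
    calc (a x)⁻¹ * (h x - G x) ≤ (a x)⁻¹ * η - (a x)⁻¹ * G x := by
          rw [mul_sub]
          gcongr
          exacts [(hinv x hx).le, hh x hx]
      _ ≤ (α₁ + 1) * η - (a x)⁻¹ * G x := by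
          gcongr
          exact (ha x hx).2.trans (le_add_of_nonneg_right zero_le_one)
  refine lt_exp_sub_sq_of_zero_cauchy_data (A := fun x ↦ (a x)⁻¹ * μ ^ 2)
    (B := fun x ↦ b x / a x) (C := fun x ↦ (a x)⁻¹ * (h x - G x)) (α := α₁ * μ ^ 2)
    hW hW' (fun x hx ↦ ?_) (fun x hx ↦ ?_) hb (fun x hx ↦ ?_) (fun x hx ↦ ?_) hpm hmd
    (by positivity) (by positivity) (by positivity) ?_ hWp hW'p
  · have hax : a x ≠ 0 := (inv_pos.1 (hinv x hx)).ne'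
    field_simp
    linarith [hode x hx]
  · exact ⟨by have := hinv x hx; positivity, by gcongr; exact (ha x hx).2⟩
  · exact (hforce x hx).trans (sub_le_self _ (mul_nonneg (hinv x hx).le (hG x hx)))
  · have hxp : x ∈ Icc p d := ⟨hpm.trans hx.1, hx.2⟩
    rw [div_mul_cancel₀ _ hden.ne']
    refine (hforce x hxp).trans (sub_le_sub_left ?_ _)
    gcongr
    exacts [(hinv x hxp).le, (ha x hxp).1, hGK x hx]
  · exact add_mul_add_one_lt_sq hα₁ hβ hμ

end Comparison

section TruncatedLaplace

/-- The Laplace transform in time, at frequency `l`, of a function observed only on `[0, e]`. -/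
noncomputable def truncatedLaplace (e l : ℝ) (g : ℝ → ℝ) : ℝ :=
  ∫ t in (0 : ℝ)..e, Real.exp (-(l * t)) * g t

variable {e l : ℝ} {g h : ℝ → ℝ}

theorem intervalIntegrable_exp_neg_mul (he : 0 ≤ e) (hg : ContinuousOn g (Icc 0 e)) :
    IntervalIntegrable (fun t ↦ Real.exp (-(l * t)) * g t) MeasureTheory.volume 0 e := by
  refine ContinuousOn.intervalIntegrable ?_
  rw [uIcc_of_le he]
  fun_prop

theorem truncatedLaplace_congr (he : 0 ≤ e) (hgh : EqOn g h (Icc 0 e)) :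
    truncatedLaplace e l g = truncatedLaplace e l h :=
  intervalIntegral.integral_congr fun t ht ↦ by
    rw [uIcc_of_le he] at ht
    simp only [hgh ht]

theorem truncatedLaplace_eq_zero (he : 0 ≤ e) (hg : ∀ t ∈ Icc 0 e, g t = 0) :
    truncatedLaplace e l g = 0 := by
  rw [truncatedLaplace_congr he (h := 0) hg]
  simp [truncatedLaplace]

theorem truncatedLaplace_nonneg (he : 0 ≤ e) (hg : ∀ t ∈ Icc 0 e, 0 ≤ g t) :
    0 ≤ truncatedLaplace e l g :=
  intervalIntegral.integral_nonneg he fun t ht ↦ mul_nonneg (Real.exp_pos _).le (hg t ht)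

theorem truncatedLaplace_const_mul (c : ℝ) :
    truncatedLaplace e l (fun t ↦ c * g t) = c * truncatedLaplace e l g := by
  simp only [truncatedLaplace, mul_left_comm _ c, intervalIntegral.integral_const_mul]

theorem truncatedLaplace_add (he : 0 ≤ e) (hg : ContinuousOn g (Icc 0 e))
    (hh : ContinuousOn h (Icc 0 e)) :
    truncatedLaplace e l (fun t ↦ g t + h t) =
      truncatedLaplace e l g + truncatedLaplace e l h := by
  simp only [truncatedLaplace, mul_add]
  exact intervalIntegral.integral_add (intervalIntegrable_exp_neg_mul he hg)
    (intervalIntegrable_exp_neg_mul he hh)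

theorem truncatedLaplace_of_hasDerivAt {g' : ℝ → ℝ} (he : 0 ≤ e)
    (hg : ∀ t ∈ Icc 0 e, HasDerivAt g (g' t) t) (hg' : ContinuousOn g' (Icc 0 e)) :
    truncatedLaplace e l g' = Real.exp (-(l * e)) * g e - g 0 + l * truncatedLaplace e l g := by
  have hexp (t : ℝ) : HasDerivAt (fun t ↦ Real.exp (-(l * t))) (-l * Real.exp (-(l * t))) t :=
    (((hasDerivAt_id t).const_mul l).neg.exp).congr_deriv (by simp [mul_comm])
  have hparts := intervalIntegral.integral_mul_deriv_eq_deriv_mul (fun t _ ↦ hexp t)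
    (fun t ht ↦ hg t (uIcc_of_le he ▸ ht))
    (Continuous.intervalIntegrable (by fun_prop) 0 e)
    (ContinuousOn.intervalIntegrable (by rwa [uIcc_of_le he]))
  simp only [mul_zero, neg_zero, Real.exp_zero, one_mul, mul_assoc,
    intervalIntegral.integral_const_mul] at hparts
  rw [truncatedLaplace, hparts, truncatedLaplace]
  ring

theorem mul_exp_le_truncatedLaplace {γ : ℝ} (he : 0 ≤ e) (hl : 0 ≤ l) (hγ : 0 ≤ γ)
    (hg : ContinuousOn g (Icc 0 e)) (hγg : ∀ t ∈ Icc 0 e, γ ≤ g t) :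
    γ * (e / 2) * Real.exp (-(l * (e / 2))) ≤ truncatedLaplace e l g := by
  have he2 : e / 2 ≤ e := half_le_self he
  have hsub : Icc 0 (e / 2) ⊆ Icc 0 e := Icc_subset_Icc_right he2
  calc γ * (e / 2) * Real.exp (-(l * (e / 2)))
      = ∫ _ in (0 : ℝ)..e / 2, Real.exp (-(l * (e / 2))) * γ := by
        rw [intervalIntegral.integral_const, smul_eq_mul]; ring
    _ ≤ ∫ t in (0 : ℝ)..e / 2, Real.exp (-(l * t)) * g t := by
        refine intervalIntegral.integral_mono_on (by positivity) intervalIntegrable_const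
          (intervalIntegrable_exp_neg_mul (by positivity) (hg.mono hsub)) fun t ht ↦ ?_
        gcongr
        exacts [ht.2, hγg t (hsub ht)]
    _ ≤ truncatedLaplace e l g := by
        refine intervalIntegral.integral_mono_interval le_rfl (by positivity) he2 ?_
          (intervalIntegrable_exp_neg_mul he hg)
        filter_upwards [MeasureTheory.ae_restrict_mem measurableSet_Ioc] with t ht
        exact mul_nonneg (Real.exp_pos _).le (hγ.trans (hγg t (Ioc_subset_Icc_self ht)))

theorem hasDerivAt_truncatedLaplace {v v' : ℝ → ℝ → ℝ} (he : 0 ≤ e)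
    (hv : ContinuousOn (uncurry v) (Icc 0 e ×ˢ univ))
    (hv' : ContinuousOn (uncurry v') (Icc 0 e ×ˢ univ))
    (hderiv : ∀ t ∈ Icc 0 e, ∀ x, HasDerivAt (v t) (v' t x) x) (x : ℝ) :
    HasDerivAt (fun x ↦ truncatedLaplace e l fun t ↦ v t x)
      (truncatedLaplace e l fun t ↦ v' t x) x := by
  have hIoc : uIoc 0 e ⊆ Icc 0 e := uIoc_of_le he ▸ Ioc_subset_Icc_self
  have hint {w : ℝ → ℝ → ℝ} (hw : ContinuousOn (uncurry w) (Icc 0 e ×ˢ univ)) (y : ℝ) :=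
    intervalIntegrable_exp_neg_mul (l := l) he (hw.uncurry_right y (mem_univ y))
  have hker : ContinuousOn (fun z : ℝ × ℝ ↦ Real.exp (-(l * z.1)) * v' z.1 z.2)
      (Icc 0 e ×ˢ univ) := ContinuousOn.mul (by fun_prop) hv'
  obtain ⟨M, hM⟩ := (isCompact_Icc.prod (isCompact_closedBall x 1)).exists_bound_of_continuousOn
    (hker.mono (prod_mono_right (subset_univ _)))
  refine (intervalIntegral.hasDerivAt_integral_of_dominated_loc_of_deriv_le (bound := fun _ ↦ M)
    (F' := fun y t ↦ Real.exp (-(l * t)) * v' t y) (Metric.closedBall_mem_nhds x one_pos)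
    (Eventually.of_forall fun y ↦ (hint hv y).def'.aestronglyMeasurable) (hint hv x)
    (hint hv' x).def'.aestronglyMeasurable ?_ intervalIntegrable_const ?_).2
  · exact Eventually.of_forall fun t ht y hy ↦ hM (t, y) ⟨hIoc ht, hy⟩
  · exact Eventually.of_forall fun t ht y _ ↦ (hderiv t (hIoc ht) y).const_mul _

theorem exists_exp_neg_sq_mul_lt {H k L a c : ℝ} (ha : 0 < a) (hc : 0 < c) :
    ∃ μ : ℝ, 1 ≤ μ ∧ H * Real.exp (-(μ ^ 2 * a)) * Real.exp (k * μ * L) <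
      c * Real.exp (-(μ ^ 2 * (a / 2))) := by
  have hgap : Tendsto (fun μ : ℝ ↦ μ * (μ * (a / 2) - k * L)) atTop atTop :=
    tendsto_id.atTop_mul_atTop₀ (tendsto_atTop_add_const_right _ _
      (tendsto_id.atTop_mul_const (half_pos ha)))
  have hlim : Tendsto (fun μ : ℝ ↦ H * Real.exp (-(μ * (μ * (a / 2) - k * L)))) atTop (𝓝 0) := by
    simpa using (Real.tendsto_exp_neg_atTop_nhds_zero.comp hgap).const_mul H
  obtain ⟨μ, hμ, hlt⟩ := ((eventually_ge_atTop 1).and (hlim.eventually_lt_const hc)).exists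
  refine ⟨μ, hμ, ?_⟩
  calc H * Real.exp (-(μ ^ 2 * a)) * Real.exp (k * μ * L)
      = H * Real.exp (-(μ * (μ * (a / 2) - k * L))) * Real.exp (-(μ ^ 2 * (a / 2))) := by
        rw [mul_assoc H, mul_assoc H, ← Real.exp_add, ← Real.exp_add]; ring_nf
    _ < c * Real.exp (-(μ ^ 2 * (a / 2))) := by gcongr

end TruncatedLaplace

section ForcedSolution

/-- `w` is a classical solution on `[0, T) × ℝ` of `∂ₜ w = a ∂ₓₓ w + b ∂ₓ w + g` with zero initial
data; the difference of two solutions of diffusion equations with the same drift is of this kind.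
The continuity of `∂ₜ w` is not recorded, being implied by the equation. -/
structure IsForcedSolution (T : ℝ) (a b : ℝ → ℝ) (g w : ℝ → ℝ → ℝ) : Prop where
  continuousOn : ContinuousOn (uncurry w) (Ico 0 T ×ˢ univ)
  continuousOn_dx : ContinuousOn (uncurry fun t ↦ deriv (w t)) (Ico 0 T ×ˢ univ)
  continuousOn_dxx : ContinuousOn (uncurry fun t ↦ deriv (deriv (w t))) (Ico 0 T ×ˢ univ)
  continuousOn_source : ContinuousOn (uncurry g) (Ico 0 T ×ˢ univ)
  differentiable : ∀ t ∈ Ico 0 T, Differentiable ℝ (w t)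
  differentiable_dx : ∀ t ∈ Ico 0 T, Differentiable ℝ (deriv (w t))
  hasDerivAt_time : ∀ t ∈ Ico 0 T, ∀ x, HasDerivAt (fun s ↦ w s x)
    (a x * deriv (deriv (w t)) x + b x * deriv (w t) x + g t x) t
  initial : ∀ x, w 0 x = 0

namespace IsForcedSolution

variable {T : ℝ} {a b : ℝ → ℝ} {g w : ℝ → ℝ → ℝ} {e l p m d : ℝ}

theorem truncatedLaplace_hasDerivAt (hw : IsForcedSolution T a b g w) (he : e ∈ Ico 0 T) (x : ℝ) :
    HasDerivAt (fun x ↦ truncatedLaplace e l fun t ↦ w t x)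
      (truncatedLaplace e l fun t ↦ deriv (w t) x) x :=
  have hsub : Icc 0 e ⊆ Ico 0 T := Icc_subset_Ico_right he.2
  hasDerivAt_truncatedLaplace he.1 (hw.continuousOn.mono (prod_mono_left hsub))
    (hw.continuousOn_dx.mono (prod_mono_left hsub))
    (fun t ht x ↦ (hw.differentiable t (hsub ht) x).hasDerivAt) x

theorem truncatedLaplace_dx_hasDerivAt (hw : IsForcedSolution T a b g w) (he : e ∈ Ico 0 T)
    (x : ℝ) :
    HasDerivAt (fun x ↦ truncatedLaplace e l fun t ↦ deriv (w t) x)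
      (truncatedLaplace e l fun t ↦ deriv (deriv (w t)) x) x :=
  have hsub : Icc 0 e ⊆ Ico 0 T := Icc_subset_Ico_right he.2
  hasDerivAt_truncatedLaplace he.1 (hw.continuousOn_dx.mono (prod_mono_left hsub))
    (hw.continuousOn_dxx.mono (prod_mono_left hsub))
    (fun t ht x ↦ (hw.differentiable_dx t (hsub ht) x).hasDerivAt) x

theorem truncatedLaplace_eq (hw : IsForcedSolution T a b g w) (he : e ∈ Ico 0 T) (x : ℝ) :
    a x * truncatedLaplace e l (fun t ↦ deriv (deriv (w t)) x) +
        b x * truncatedLaplace e l (fun t ↦ deriv (w t) x) +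
        truncatedLaplace e l (fun t ↦ g t x) =
      Real.exp (-(l * e)) * w e x + l * truncatedLaplace e l (fun t ↦ w t x) := by
  have hsub : Icc 0 e ⊆ Ico 0 T := Icc_subset_Ico_right he.2
  have hslice {h : ℝ → ℝ → ℝ} (hh : ContinuousOn (uncurry h) (Ico 0 T ×ˢ univ)) :
      ContinuousOn (fun t ↦ h t x) (Icc 0 e) := (hh.uncurry_right x (mem_univ x)).mono hsub
  have hdxx := (hslice hw.continuousOn_dxx).const_mul (a x)
  have hdx := (hslice hw.continuousOn_dx).const_mul (b x)
  have hg := hslice hw.continuousOn_source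
  have htime := truncatedLaplace_of_hasDerivAt (l := l) he.1
    (fun t ht ↦ hw.hasDerivAt_time t (hsub ht) x) ((hdxx.fun_add hdx).fun_add hg)
  rwa [truncatedLaplace_add he.1 (hdxx.fun_add hdx) hg, truncatedLaplace_add he.1 hdxx hdx,
    truncatedLaplace_const_mul, truncatedLaplace_const_mul, hw.initial, sub_zero] at htime

theorem exists_truncatedLaplace_neg (hw : IsForcedSolution T a b g w) (he : e ∈ Ioo 0 T)
    (hacont : Continuous a) (hbcont : Continuous b) (ha : ∀ x, 0 < a x) (hpm : p ≤ m)
    (hmd : m < d) {γ : ℝ} (hγ : 0 < γ) (hp : ∀ t ∈ Icc 0 e, w t p = 0 ∧ deriv (w t) p = 0)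
    (hg : ∀ t ∈ Icc 0 e, ∀ x ∈ Icc p d, 0 ≤ g t x)
    (hgγ : ∀ t ∈ Icc 0 e, ∀ x ∈ Icc m d, γ ≤ g t x) :
    ∃ l, truncatedLaplace e l (fun t ↦ w t d) < 0 := by
  have he₀ : 0 < e := he.1
  have heT : e ∈ Ico 0 T := Ioo_subset_Ico_self he
  have hsub : Icc 0 e ⊆ Ico 0 T := Icc_subset_Ico_right he.2
  have hpp : p ∈ Icc p d := left_mem_Icc.2 (hpm.trans hmd.le)
  obtain ⟨α₀, hα₀, α₁, hα⟩ := exists_pos_forall_mem_Icc isCompact_Icc ⟨p, hpp⟩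
    (hacont.inv₀ fun x ↦ (ha x).ne').continuousOn fun x _ ↦ inv_pos.2 (ha x)
  obtain ⟨β, hβ⟩ := isCompact_Icc.exists_bound_of_continuousOn
    (hbcont.div hacont fun x ↦ (ha x).ne').continuousOn
  obtain ⟨H, hH⟩ := isCompact_Icc.exists_bound_of_continuousOn
    ((hw.continuousOn.uncurry_left e heT).mono (subset_univ (Icc p d)))
  have hβ₀ : 0 ≤ β := (norm_nonneg _).trans (hβ p hpp)
  have hH₀ : 0 ≤ H := (norm_nonneg _).trans (hH p hpp)
  have : 0 < d - m := sub_pos.2 hmd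
  set κ := α₀ * (γ * (e / 2)) / (2 + 2 * β * (d - m)) * (d - m) ^ 2
  obtain ⟨μ, hμ, hlt⟩ := exists_exp_neg_sq_mul_lt (H := (α₁ + 1) * (H + 1))
    (k := α₁ + β + 2) (L := d - p) (c := κ) he₀ (by positivity)
  refine ⟨μ ^ 2, (lt_of_resolvent_eq (η := Real.exp (-(μ ^ 2 * e)) * (H + 1))
    (fun x _ ↦ hw.truncatedLaplace_hasDerivAt heT x)
    (fun x _ ↦ hw.truncatedLaplace_dx_hasDerivAt heT x)
    (fun x _ ↦ hw.truncatedLaplace_eq heT x)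
    hα hβ (fun x hx ↦ ?_)
    (fun x hx ↦ truncatedLaplace_nonneg he₀.le fun t ht ↦ hg t ht x hx)
    (fun x hx ↦ mul_exp_le_truncatedLaplace he₀.le (sq_nonneg μ) hγ.le
      ((hw.continuousOn_source.uncurry_right x (mem_univ x)).mono hsub)
      fun t ht ↦ hgγ t ht x hx)
    hpm hmd.le hα₀ (by positivity) (by positivity) hμ
    (truncatedLaplace_eq_zero he₀.le fun t ht ↦ (hp t ht).1)
    (truncatedLaplace_eq_zero he₀.le fun t ht ↦ (hp t ht).2)).trans_le ?_⟩
  · gcongr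
    exact (le_abs_self _).trans ((hH x hx).trans (le_add_of_nonneg_right zero_le_one))
  · rw [sub_nonpos]
    convert hlt.le using 1 <;> ring

theorem eventually_pos_of_source_pos (hw : IsForcedSolution T a b g w) (hT : 0 < T)
    (hgd : 0 < g 0 d) : ∀ᶠ t in 𝓝[>] (0 : ℝ), 0 < w t d := by
  have h0 : w 0 = fun _ ↦ 0 := funext hw.initial
  have hderiv : 0 < deriv (fun s ↦ w s d) 0 := by
    rw [(hw.hasDerivAt_time 0 (left_mem_Ico.2 hT) d).deriv]
    simpa [h0] using hgd
  filter_upwards [(eventually_nhdsWithin_sign_eq_of_deriv_pos hderiv (hw.initial d)).filter_mono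
    nhdsWithin_le_nhds, self_mem_nhdsWithin] with t hsign ht
  rwa [sub_zero, sign_pos (mem_Ioi.1 ht), sign_eq_one_iff] at hsign

theorem source_nonpos (hw : IsForcedSolution T a b g w) (hacont : Continuous a)
    (hbcont : Continuous b) (ha : ∀ x, 0 < a x) {ε : ℝ} (hε : ε ∈ Ioo 0 T) (hpd : p < d)
    (hp : ∀ t ∈ Icc 0 ε, w t p = 0 ∧ deriv (w t) p = 0)
    (hg : ∀ t ∈ Icc 0 ε, ∀ x ∈ Icc p d, 0 ≤ g t x) : g 0 d ≤ 0 := by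
  by_contra! hgd
  have hT : 0 < T := hε.1.trans hε.2
  have hg0 : ContinuousAt (g 0) d :=
    (hw.continuousOn_source.uncurry_left 0 (left_mem_Ico.2 hT)).continuousAt univ_mem
  have hgnear : ∀ᶠ x in 𝓝[≤] d, g 0 d / 2 < g 0 x :=
    (hg0.eventually_const_lt (half_lt_self hgd)).filter_mono nhdsWithin_le_nhds
  obtain ⟨m, hmd, hmg⟩ := mem_nhdsLE_iff_exists_Icc_subset.1 hgnear
  obtain ⟨e₁, he₁, hwpos⟩ :=
    mem_nhdsGT_iff_exists_Ioc_subset.1 (hw.eventually_pos_of_source_pos hT hgd)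
  have hmg' : ∀ x ∈ Icc (max p m) d, 0 < g 0 x - g 0 d / 2 := fun x hx ↦
    sub_pos.2 (hmg (Icc_subset_Icc_left (le_max_right p m) hx))
  obtain ⟨e, hgγ, he⟩ := ((eventually_forall_pos_of_initial_pos (h := fun t x ↦ g t x - g 0 d / 2)
    hT isCompact_Icc (hw.continuousOn_source.sub continuousOn_const) hmg').and
    (Ioo_mem_nhdsGT (lt_min hε.1 he₁))).exists
  have heε : e ≤ ε := he.2.le.trans (min_le_left ε e₁)
  have hsub : Icc 0 e ⊆ Icc 0 ε := Icc_subset_Icc_right heε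
  obtain ⟨l, hl⟩ := hw.exists_truncatedLaplace_neg ⟨he.1, heε.trans_lt hε.2⟩ hacont hbcont ha
    (le_max_left p m) (max_lt hpd hmd) (half_pos hgd) (fun t ht ↦ hp t (hsub ht))
    (fun t ht ↦ hg t (hsub ht)) fun t ht x hx ↦ (sub_pos.1 (hgγ t ht x hx)).le
  refine hl.not_ge (truncatedLaplace_nonneg he.1.le fun t ht ↦ ?_)
  rcases ht.1.eq_or_lt with rfl | ht0
  · exact (hw.initial d).ge
  · exact (hwpos ⟨ht0, ht.2.trans (he.2.le.trans (min_le_right ε e₁))⟩).le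

end IsForcedSolution
end ForcedSolution

section DiffusionComparison

variable {T ε p d : ℝ} {b σ τ f : ℝ → ℝ} {u v : ℝ → ℝ → ℝ}

theorem IsClassicalSolution.initial_eq (hu : IsClassicalSolution T b σ f u) : u 0 = f :=
  funext hu.2.2.2.2.2.2.2.2

theorem IsClassicalSolution.differentiable (hu : IsClassicalSolution T b σ f u) :
    ∀ t ∈ Ico 0 T, Differentiable ℝ (u t) :=
  hu.2.2.1

theorem IsClassicalSolution.continuousOn_dxx (hu : IsClassicalSolution T b σ f u) :
    ContinuousOn (uncurry fun t ↦ deriv (deriv (u t))) (Ico 0 T ×ˢ univ) :=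
  hu.2.2.2.2.2.2.1

theorem IsClassicalSolution.continuous_deriv_deriv_initial (hT : 0 < T)
    (hu : IsClassicalSolution T b σ f u) : Continuous (deriv (deriv f)) := by
  rw [← hu.initial_eq]
  exact continuousOn_univ.1 (hu.continuousOn_dxx.uncurry_left 0 (left_mem_Ico.2 hT))

theorem IsClassicalSolution.sub (hu : IsClassicalSolution T b σ f u)
    (hv : IsClassicalSolution T b τ f v) (hσ : Continuous σ) (hτ : Continuous τ) :
    IsForcedSolution T (fun x ↦ σ x ^ 2 / 2) b
      (fun t x ↦ (σ x ^ 2 - τ x ^ 2) / 2 * deriv (deriv (v t)) x) (u - v) := by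
  obtain ⟨hcu, htu, hxu, hxxu, -, hcxu, hcxxu, hpdeu, hinitu⟩ := hu
  obtain ⟨hcv, htv, hxv, hxxv, -, hcxv, hcxxv, hpdev, hinitv⟩ := hv
  have hdx : ∀ t ∈ Ico 0 T, deriv ((u - v) t) = deriv (u t) - deriv (v t) := fun t ht ↦
    funext fun x ↦ deriv_sub (hxu t ht x) (hxv t ht x)
  have hdxx : ∀ t ∈ Ico 0 T,
      deriv (deriv ((u - v) t)) = deriv (deriv (u t)) - deriv (deriv (v t)) := fun t ht ↦ by
    rw [hdx t ht]
    exact funext fun x ↦ deriv_sub (hxxu t ht x) (hxxv t ht x)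
  refine ⟨hcu.sub hcv, (hcxu.sub hcxv).congr fun z hz ↦ congrFun (hdx z.1 hz.1) z.2,
    (hcxxu.sub hcxxv).congr fun z hz ↦ congrFun (hdxx z.1 hz.1) z.2,
    ContinuousOn.mul (by fun_prop) hcxxv, fun t ht x ↦ (hxu t ht x).sub (hxv t ht x), ?_, ?_, ?_⟩
  · intro t ht x
    rw [hdx t ht]
    exact (hxxu t ht x).sub (hxxv t ht x)
  · intro t ht x
    refine ((htu t ht x).hasDerivAt.sub (htv t ht x).hasDerivAt).congr_deriv ?_
    rw [hpdeu t ht, hpdev t ht, hdxx t ht, hdx t ht, Pi.sub_apply, Pi.sub_apply]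
    ring
  · intro x
    rw [Pi.sub_apply, Pi.sub_apply, hinitu, hinitv, sub_self]

theorem deriv_deriv_comp_neg {F : Type*} [NormedAddCommGroup F] [NormedSpace ℝ F] (g : ℝ → F)
    (x : ℝ) : deriv (deriv fun y ↦ g (-y)) x = deriv (deriv g) (-x) := by
  have hdg : (deriv fun y ↦ g (-y)) = fun y ↦ -deriv g (-y) := funext (deriv_comp_neg g)
  rw [hdg, deriv.fun_neg, deriv_comp_neg, neg_neg]

theorem IsClassicalSolution.reflect_s1 (hu : IsClassicalSolution T b σ f u) :
    IsClassicalSolution T (fun x ↦ -b (-x)) (fun x ↦ σ (-x)) (fun x ↦ f (-x))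
      fun t x ↦ u t (-x) := by
  obtain ⟨hcu, htu, hxu, hxxu, hctu, hcxu, hcxxu, hpdeu, hinitu⟩ := hu
  have hneg : ContinuousOn (fun z : ℝ × ℝ ↦ (z.1, -z.2)) (Ico 0 T ×ˢ univ) := by fun_prop
  have hmaps : MapsTo (fun z : ℝ × ℝ ↦ (z.1, -z.2)) (Ico 0 T ×ˢ univ) (Ico 0 T ×ˢ univ) :=
    fun z hz ↦ ⟨hz.1, mem_univ _⟩
  have hdx (t : ℝ) : deriv (fun x ↦ u t (-x)) = fun x ↦ -deriv (u t) (-x) :=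
    funext fun x ↦ deriv_comp_neg (u t) x
  have hdxx (t : ℝ) : deriv (deriv fun x ↦ u t (-x)) = fun x ↦ deriv (deriv (u t)) (-x) :=
    funext (deriv_deriv_comp_neg (u t))
  refine ⟨hcu.comp hneg hmaps, fun t ht x ↦ htu t ht (-x),
    fun t ht x ↦ (hxu t ht (-x)).comp x differentiableAt_id.neg, fun t ht x ↦ ?_,
    hctu.comp hneg hmaps, ?_, ?_, fun t ht x ↦ ?_, fun x ↦ hinitu (-x)⟩
  · rw [hdx]
    exact ((hxxu t ht (-x)).comp x differentiableAt_id.neg).neg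
  · simp only [hdx]
    exact (hcxu.comp hneg hmaps).neg
  · simp only [hdxx]
    exact hcxxu.comp hneg hmaps
  · rw [hpdeu t ht (-x), hdxx, hdx]
    ring

theorem IsClassicalSolution.sq_sub_sq_mul_nonpos (hu : IsClassicalSolution T b σ f u)
    (hv : IsClassicalSolution T b τ f v) (hb : Continuous b) (hσ : Continuous σ)
    (hτ : Continuous τ) (hσpos : ∀ x, 0 < σ x) (hf : ∀ x, deriv (deriv f) x ≠ 0)
    (hε : ε ∈ Ioo 0 T) (hpd : p < d)
    (hp : ∀ t ∈ Ioo 0 ε, u t p = v t p ∧ deriv (u t) p = deriv (v t) p)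
    (hq : ∀ x ∈ Icc p d, 0 ≤ (σ x ^ 2 - τ x ^ 2) * deriv (deriv f) x) :
    (σ d ^ 2 - τ d ^ 2) * deriv (deriv f) d ≤ 0 := by
  have hT : 0 < T := hε.1.trans hε.2
  have hcf : Continuous (deriv (deriv f)) := hu.continuous_deriv_deriv_initial hT
  obtain ⟨e, hconv, he⟩ := ((eventually_forall_pos_of_initial_pos (K := Icc p d)
    (h := fun t x ↦ deriv (deriv (v t)) x * deriv (deriv f) x) hT isCompact_Icc
    (hv.continuousOn_dxx.mul (hcf.comp continuous_snd).continuousOn) fun x _ ↦ by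
      rw [hv.initial_eq]
      exact mul_self_pos.2 (hf x)).and (Ioo_mem_nhdsGT hε.1)).exists
  have hsource : ∀ t ∈ Icc 0 e, ∀ x ∈ Icc p d,
      0 ≤ (σ x ^ 2 - τ x ^ 2) / 2 * deriv (deriv (v t)) x := by
    intro t ht x hx
    have hfx : 0 < deriv (deriv f) x ^ 2 := sq_pos_of_ne_zero (hf x)
    refine nonneg_of_mul_nonneg_left ?_ hfx
    linarith [mul_nonneg (hq x hx) (hconv t ht x hx).le]
  have hle := (hu.sub hv hσ hτ).source_nonpos (by fun_prop) hb
    (fun x ↦ half_pos (pow_pos (hσpos x) 2)) ⟨he.1, he.2.trans hε.2⟩ hpd (fun t ht ↦ ?_) hsource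
  · rw [hv.initial_eq] at hle
    linarith
  · rcases ht.1.eq_or_lt with rfl | ht0
    · simp [hu.initial_eq, hv.initial_eq]
    · have htT : t ∈ Ico 0 T := ⟨ht.1, ht.2.trans_lt (he.2.trans hε.2)⟩
      obtain ⟨hval, hslope⟩ := hp t ⟨ht0, ht.2.trans_lt he.2⟩
      exact ⟨sub_eq_zero.2 hval, (deriv_sub (hu.differentiable t htT p)
        (hv.differentiable t htT p)).trans (sub_eq_zero.2 hslope)⟩

theorem IsClassicalSolution.not_forall_pos_after_eqOn {c : ℝ} (hu : IsClassicalSolution T b σ f u)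
    (hv : IsClassicalSolution T b τ f v) (hb : Continuous b) (hσ : Continuous σ)
    (hτ : Continuous τ) (hσpos : ∀ x, 0 < σ x) (hf : ∀ x, deriv (deriv f) x ≠ 0)
    (hε : ε ∈ Ioo 0 T) (hp : ∀ t ∈ Ioo 0 ε, u t p = v t p ∧ deriv (u t) p = deriv (v t) p)
    (hpc : p ≤ c) (hcd : c < d) (hστ : EqOn σ τ (Ico p c)) :
    ¬∀ x ∈ Ioc c d, 0 < (σ x ^ 2 - τ x ^ 2) * deriv (deriv f) x := by
  intro hpos
  have hcf : Continuous (deriv (deriv f)) := hu.continuous_deriv_deriv_initial (hε.1.trans hε.2)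
  have hq : Continuous fun x ↦ (σ x ^ 2 - τ x ^ 2) * deriv (deriv f) x := by fun_prop
  have hqc : ∀ x ∈ Icc c d, 0 ≤ (σ x ^ 2 - τ x ^ 2) * deriv (deriv f) x := by
    rw [← closure_Ioc hcd.ne]
    exact fun x hx ↦ closure_minimal (fun y hy ↦ (hpos y hy).le)
      (isClosed_Ici.preimage hq) hx
  have hle := hu.sq_sub_sq_mul_nonpos hv hb hσ hτ hσpos hf hε (hpc.trans_lt hcd) hp fun x hx ↦ by
    rcases lt_or_ge x c with hxc | hcx
    · rw [hστ ⟨hx.1, hxc⟩, sub_self, zero_mul]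
    · exact hqc x ⟨hcx, hx.2⟩
  exact hle.not_gt (hpos d (right_mem_Ioc.2 hcd))

theorem IsClassicalSolution.eqOn_Ici (hu : IsClassicalSolution T b σ f u)
    (hv : IsClassicalSolution T b τ f v) (hb : Continuous b) (hσ : OneSidedAnalytic σ)
    (hτ : OneSidedAnalytic τ) (hσpos : ∀ x, 0 < σ x) (hτpos : ∀ x, 0 < τ x)
    (hf : ∀ x, deriv (deriv f) x ≠ 0) (hε : ε ∈ Ioo 0 T)
    (hp : ∀ t ∈ Ioo 0 ε, u t p = v t p ∧ deriv (u t) p = deriv (v t) p) :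
    EqOn σ τ (Ici p) := by
  intro y hpy
  by_contra hy
  obtain ⟨c, hpc, hστ, hfreq⟩ := exists_first_difference hpy hy
  obtain ⟨d, hcd, hdiff⟩ := hσ.exists_forall_mem_Ioc_ne hτ hfreq
  have hcf : Continuous (deriv (deriv f)) := hu.continuous_deriv_deriv_initial (hε.1.trans hε.2)
  have hσc : Continuous σ := hσ.continuous
  have hτc : Continuous τ := hτ.continuous
  have hq : Continuous fun x ↦ (σ x ^ 2 - τ x ^ 2) * deriv (deriv f) x := by fun_prop
  rcases forall_pos_or_forall_neg_of_isPreconnected isPreconnected_Ioc hq.continuousOn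
    (fun x hx ↦ mul_ne_zero (sub_ne_zero.2 fun hsq ↦ hdiff x hx
      ((pow_left_inj₀ (hσpos x).le (hτpos x).le two_ne_zero).1 hsq)) (hf x)) with hpos | hneg
  · exact hu.not_forall_pos_after_eqOn hv hb hσc hτc hσpos hf hε hp hpc hcd hστ hpos
  · refine hv.not_forall_pos_after_eqOn hu hb hτc hσc hτpos hf hε
      (fun t ht ↦ (hp t ht).imp Eq.symm Eq.symm) hpc hcd hστ.symm fun x hx ↦ ?_
    linarith [hneg x hx]

end DiffusionComparison

theorem diffusion_uniqueness_general {T ε p : ℝ} {b σ τ f : ℝ → ℝ} {u v : ℝ → ℝ → ℝ}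
    (hb : Continuous b) (hσ : OneSidedAnalytic σ) (hτ : OneSidedAnalytic τ)
    (hσpos : ∀ x, 0 < σ x) (hτpos : ∀ x, 0 < τ x) (hf : ∀ x, deriv (deriv f) x ≠ 0)
    (hu : IsClassicalSolution T b σ f u) (hv : IsClassicalSolution T b τ f v)
    (hε : ε ∈ Ioo 0 T)
    (hp : ∀ t ∈ Ioo 0 ε, u t p = v t p ∧ deriv (u t) p = deriv (v t) p) (x : ℝ) :
    σ x = τ x := by
  rcases le_total p x with hpx | hxp
  · exact hu.eqOn_Ici hv hb hσ hτ hσpos hτpos hf hε hp hpx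
  · have hreflect := hu.reflect_s1.eqOn_Ici hv.reflect_s1 (p := -p) (by fun_prop) hσ.comp_neg hτ.comp_neg
      (fun y ↦ hσpos (-y)) (fun y ↦ hτpos (-y))
      (fun y ↦ (deriv_deriv_comp_neg f y).trans_ne (hf (-y))) hε fun t ht ↦ by
        simpa only [deriv_comp_neg, neg_neg, neg_inj] using hp t ht
    simpa only [neg_neg] using hreflect (neg_le_neg hxp)

/-- Theorem 2: with known drift coefficient, the diffusion coefficient is uniquely
determined by observation of the solution on a small time-space cylinder. -/
theorem diffusion_uniqueness
    (T : ℝ) (hT : 0 < T)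
    (b sigma sigmat : ℝ → ℝ)
    (hbLip : ∃ K, LipschitzWith K b)
    (hs : ClassM sigma) (hst : ClassM sigmat)
    (hspos : ∀ x, 0 < sigma x) (hstpos : ∀ x, 0 < sigmat x)
    (f : ℝ → ℝ) (hf : ContDiff ℝ 2 f) (hfdd : ∀ x, deriv (deriv f) x ≠ 0)
    (u ut : ℝ → ℝ → ℝ)
    (hu : IsClassicalSolution T b sigma f u)
    (hut : IsClassicalSolution T b sigmat f ut)
    (ε : ℝ) (hε : ε ∈ Ioo 0 T)
    (ω : Set ℝ) (hω : IsOpen ω) (hωne : ω.Nonempty)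
    (hobs : ∀ t ∈ Ioo 0 ε, ∀ x ∈ ω, u t x = ut t x) :
    ∀ x : ℝ, sigma x = sigmat x := by
  obtain ⟨p, hp⟩ := hωne
  obtain ⟨K, hbK⟩ := hbLip
  have hnear : ∀ t ∈ Ioo 0 ε, u t =ᶠ[𝓝 p] ut t := fun t ht ↦
    mem_of_superset (hω.mem_nhds hp) (hobs t ht)
  exact diffusion_uniqueness_general hbK.continuous hs.oneSidedAnalytic hst.oneSidedAnalytic
    hspos hstpos hfdd hu hut hε fun t ht ↦ ⟨(hnear t ht).eq_of_nhds, (hnear t ht).deriv_eq⟩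
end
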